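/- arXiv:1510.05501 — 3 statements merged into one kernel-verified Lean document; each statement's English description precedes it below -/
import Mathlib

section
/- Let m be a positive integer, let f belong to the class B^(m), and let g belong to X^(s) strictly for some positive integer s, with g(x) > 0 for all large x and g(x) → +∞ as x → ∞. Then the composition φ(x) = f(g(x)) also belongs to the class B^(m). -/
open Filter Finset Real

noncomputable section

/-- `α` has the Poincaré-type asymptotic expansion `α(x) ~ Σ_{i≥0} c_i x^(γ-i)` as `x → ∞`,
which may be differentiated term by term any number of times: `α` is infinitely
differentiable on some `(a, ∞)` with `a > 0`, and for all `j N : ℕ`,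
`α^{(j)}(x) − Σ_{i<N} c_i (γ−i)(γ−i−1)⋯(γ−i−j+1) x^(γ−i−j) = O(x^(γ−N−j))` as `x → ∞`. -/
def HasExpA (γ : ℝ) (c : ℕ → ℝ) (α : ℝ → ℝ) : Prop :=
  (∃ a : ℝ, 0 < a ∧ ∀ x ∈ Set.Ioi a, ContDiffAt ℝ (⊤ : ℕ∞) α x) ∧
  ∀ j N : ℕ,
    (fun x : ℝ => iteratedDeriv j α x -
        ∑ i ∈ Finset.range N,
          c i * (∏ l ∈ Finset.range j, (γ - (i : ℝ) - (l : ℝ))) * x ^ (γ - (i : ℝ) - (j : ℝ)))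
      =O[atTop] fun x : ℝ => x ^ (γ - (N : ℝ) - (j : ℝ))

/-- `α` belongs to the class `A^(γ)`. -/
def MemA (γ : ℝ) (α : ℝ → ℝ) : Prop := ∃ c : ℕ → ℝ, HasExpA γ c α

/-- `α` belongs to the class `A^(γ)` strictly (`c 0 ≠ 0`). -/
def MemAS (γ : ℝ) (α : ℝ → ℝ) : Prop := ∃ c : ℕ → ℝ, c 0 ≠ 0 ∧ HasExpA γ c α

/-- `α` belongs to `X^(γ)` strictly: `α ∈ A^(γ)` strictly and every derivative `α^{(j)}`,
`j ≥ 1`, either vanishes identically for all large `x` or belongs to `A^(γ−j−k)` strictly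
for some nonnegative integer `k`. -/
def MemXS (γ : ℝ) (α : ℝ → ℝ) : Prop :=
  MemAS γ α ∧
  ∀ j : ℕ, 1 ≤ j →
    (∀ᶠ x in atTop, iteratedDeriv j α x = 0) ∨
    ∃ k : ℕ, MemAS (γ - (j : ℝ) - (k : ℝ)) (iteratedDeriv j α)

/-- `f`, infinitely differentiable for all large `x`, belongs to the class `B^(m)`:
`f(x) = Σ_{k=1}^m p_k(x) f^{(k)}(x)` for all large `x`, where for `1 ≤ k ≤ m−1` each `p_k`
either has an empty expansion (all its derivatives are `O(x^{−μ})` for every `μ > 0`) or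
belongs to `A^(i_k)` strictly with `i_k ≤ k` an integer, and `p_m ∈ A^(i_m)` strictly with
`i_m ≤ m` an integer. -/
def MemB (m : ℕ) (f : ℝ → ℝ) : Prop :=
  (∀ᶠ x in atTop, ContDiffAt ℝ (⊤ : ℕ∞) f x) ∧
  ∃ p : ℕ → ℝ → ℝ,
    (∀ᶠ x in atTop, f x = ∑ k ∈ Finset.Icc 1 m, p k x * iteratedDeriv k f x) ∧
    (∀ k ∈ Finset.Icc 1 (m - 1),
      ((∀ᶠ x in atTop, ContDiffAt ℝ (⊤ : ℕ∞) (p k) x) ∧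
        ∀ μ : ℝ, 0 < μ → ∀ j : ℕ,
          (iteratedDeriv j (p k)) =O[atTop] fun x : ℝ => x ^ (-μ)) ∨
      ∃ i : ℤ, i ≤ (k : ℤ) ∧ MemAS (i : ℝ) (p k)) ∧
    ∃ i : ℤ, i ≤ (m : ℤ) ∧ MemAS (i : ℝ) (p m)

/-- The Bell polynomial `B_{n,k}(y_1, …, y_{n−k+1})`. -/
def bellPoly (n k : ℕ) (y : ℕ → ℝ) : ℝ :=
  ∑ j ∈ Finset.univ.filter
      (fun j : Fin (n - k + 1) → Fin (n + 1) =>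
        (∑ i, (j i : ℕ)) = k ∧ (∑ i, (i.1 + 1) * (j i : ℕ)) = n),
    ((n.factorial : ℝ) / ∏ i, ((j i : ℕ).factorial : ℝ)) *
      ∏ i, (y (i.1 + 1) / ((i.1 + 1).factorial : ℝ)) ^ (j i : ℕ)

namespace CompB
open Topology Asymptotics

def EvS (f : ℝ → ℝ) : Prop := ∀ᶠ x in atTop, ContDiffAt ℝ (⊤ : ℕ∞) f x

def SN (n : ℕ) (μ : ℤ) (f : ℝ → ℝ) : Prop :=
  EvS f ∧ ∀ j ≤ n, iteratedDeriv j f =O[atTop] fun x : ℝ => x ^ (μ - (j : ℤ))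

def S (μ : ℤ) (f : ℝ → ℝ) : Prop := ∀ n, SN n μ f

lemma ev_nhds {P : ℝ → Prop} (h : ∀ᶠ x in atTop, P x) : ∀ᶠ x in atTop, ∀ᶠ y in 𝓝 x, P y := by
  obtain ⟨a, ha⟩ := eventually_atTop.1 h
  filter_upwards [eventually_gt_atTop a] with x hx
  filter_upwards [Ioi_mem_nhds hx] with y hy using ha y (le_of_lt hy)

lemma ev_deriv {f g : ℝ → ℝ} (h : f =ᶠ[atTop] g) : deriv f =ᶠ[atTop] deriv g := by
  filter_upwards [ev_nhds h] with x hx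
  exact Filter.EventuallyEq.deriv_eq hx

lemma ev_iter {f g : ℝ → ℝ} (h : f =ᶠ[atTop] g) (n : ℕ) :
    iteratedDeriv n f =ᶠ[atTop] iteratedDeriv n g := by
  induction n with
  | zero => simpa using h
  | succ n ih => rw [iteratedDeriv_succ, iteratedDeriv_succ]; exact ev_deriv ih

lemma EvS.congr {f g : ℝ → ℝ} (hf : EvS f) (h : f =ᶠ[atTop] g) : EvS g := by
  filter_upwards [hf, ev_nhds h] with x hx hy
  exact hx.congr_of_eventuallyEq (Filter.EventuallyEq.symm hy)

lemma EvS.der {f : ℝ → ℝ} (hf : EvS f) : EvS (deriv f) := by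
  filter_upwards [hf] with x hx
  exact hx.derivWithin (by norm_cast)

lemma EvS.diff {f : ℝ → ℝ} (hf : EvS f) : ∀ᶠ x in atTop, DifferentiableAt ℝ f x := by
  filter_upwards [hf] with x hx
  exact hx.differentiableAt (by simp)

lemma EvS.add {f g : ℝ → ℝ} (hf : EvS f) (hg : EvS g) : EvS (fun x => f x + g x) := by
  filter_upwards [hf, hg] with x hx hy using hx.add hy

lemma EvS.mul {f g : ℝ → ℝ} (hf : EvS f) (hg : EvS g) : EvS (fun x => f x * g x) := by
  filter_upwards [hf, hg] with x hx hy using hx.mul hy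

lemma EvS.const (c : ℝ) : EvS (fun _ => c) :=
  Filter.Eventually.of_forall fun _ => contDiffAt_const

lemma EvS.zpow (n : ℤ) : EvS (fun x => x ^ n) := by
  filter_upwards [eventually_gt_atTop 0] with x hx
  cases n with
  | ofNat k => simpa using (contDiffAt_id (𝕜 := ℝ) (x := x)).pow k
  | negSucc k =>
    simp only [zpow_negSucc]
    exact ((contDiffAt_id (𝕜 := ℝ) (x := x)).pow (k+1)).inv (by simp; positivity)

lemma EvS.comp {f g : ℝ → ℝ} (hf : EvS f) (hg : EvS g) (ht : Tendsto g atTop atTop) :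
    EvS (fun x => f (g x)) := by
  filter_upwards [ht.eventually hf, hg] with x hx hy
  exact hx.comp x hy

lemma zpow_bigO {μ ν : ℤ} (h : μ ≤ ν) :
    (fun x : ℝ => x ^ μ) =O[atTop] fun x : ℝ => x ^ ν := by
  refine IsBigO.of_bound 1 ?_
  filter_upwards [eventually_ge_atTop 1] with x hx
  have h0 : 0 < x := by linarith
  rw [Real.norm_of_nonneg (by positivity), Real.norm_of_nonneg (by positivity), one_mul]
  exact zpow_le_zpow_right₀ hx h

lemma zpow_mul_ev (μ ν : ℤ) :
    (fun x : ℝ => x ^ μ * x ^ ν) =ᶠ[atTop] fun x : ℝ => x ^ (μ + ν) := by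
  filter_upwards [eventually_gt_atTop 0] with x hx
  rw [zpow_add₀ hx.ne']

lemma bigO_mul {f g : ℝ → ℝ} {μ ν : ℤ} (hf : f =O[atTop] fun x : ℝ => x ^ μ)
    (hg : g =O[atTop] fun x : ℝ => x ^ ν) :
    (fun x => f x * g x) =O[atTop] fun x : ℝ => x ^ (μ + ν) :=
  (hf.mul hg).congr' EventuallyEq.rfl (zpow_mul_ev μ ν)

lemma SN.congr {n : ℕ} {μ : ℤ} {f g : ℝ → ℝ} (hf : SN n μ f) (h : f =ᶠ[atTop] g) : SN n μ g :=
  ⟨hf.1.congr h, fun j hj => (hf.2 j hj).congr' (ev_iter h j) EventuallyEq.rfl⟩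

lemma SN.le {n k : ℕ} {μ : ℤ} {f : ℝ → ℝ} (hf : SN n μ f) (h : k ≤ n) : SN k μ f :=
  ⟨hf.1, fun j hj => hf.2 j (hj.trans h)⟩

lemma SN.mono {n : ℕ} {μ ν : ℤ} {f : ℝ → ℝ} (hf : SN n μ f) (h : μ ≤ ν) : SN n ν f :=
  ⟨hf.1, fun j hj => (hf.2 j hj).trans (zpow_bigO (by omega))⟩

lemma SN.bigO {n : ℕ} {μ : ℤ} {f : ℝ → ℝ} (hf : SN n μ f) : f =O[atTop] fun x : ℝ => x ^ μ := by
  simpa using hf.2 0 (Nat.zero_le _)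

lemma SN_zero {μ : ℤ} {f : ℝ → ℝ} (h : EvS f) (hf : f =O[atTop] fun x : ℝ => x ^ μ) :
    SN 0 μ f := by
  refine ⟨h, fun j hj => ?_⟩
  obtain rfl : j = 0 := by omega
  simpa using hf

lemma SN_succ {n : ℕ} {μ : ℤ} {f : ℝ → ℝ} (h : EvS f) (hf : f =O[atTop] fun x : ℝ => x ^ μ)
    (hd : SN n (μ - 1) (deriv f)) : SN (n + 1) μ f := by
  refine ⟨h, fun j hj => ?_⟩
  cases j with
  | zero => simpa using hf
  | succ j =>
    rw [iteratedDeriv_succ']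
    have := hd.2 j (by omega)
    convert this using 3
    push_cast; ring

lemma SN.der {n : ℕ} {μ : ℤ} {f : ℝ → ℝ} (h : SN (n + 1) μ f) : SN n (μ - 1) (deriv f) := by
  refine ⟨h.1.der, fun j hj => ?_⟩
  have := h.2 (j + 1) (by omega)
  rw [iteratedDeriv_succ'] at this
  convert this using 3
  push_cast; ring

lemma SN.add {n : ℕ} {μ : ℤ} {f g : ℝ → ℝ} (hf : SN n μ f) (hg : SN n μ g) :
    SN n μ (fun x => f x + g x) := by
  refine ⟨hf.1.add hg.1, fun j hj => ?_⟩
  refine ((hf.2 j hj).add (hg.2 j hj)).congr' ?_ EventuallyEq.rfl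
  filter_upwards [hf.1, hg.1] with x hx hy
  exact (iteratedDeriv_add (hx.of_le (by exact_mod_cast le_top))
    (hy.of_le (by exact_mod_cast le_top))).symm

lemma SN.const_mul {n : ℕ} {μ : ℤ} {f : ℝ → ℝ} (c : ℝ) (hf : SN n μ f) :
    SN n μ (fun x => c * f x) := by
  refine ⟨(EvS.const c).mul hf.1, fun j hj => ?_⟩
  refine ((hf.2 j hj).const_mul_left c).congr' ?_ EventuallyEq.rfl
  filter_upwards [hf.1] with x hx
  exact (iteratedDeriv_const_mul c (hx.of_le (by exact_mod_cast le_top))).symm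

lemma SN_const_zero (n : ℕ) (μ : ℤ) : SN n μ (fun _ => 0) := by
  refine ⟨EvS.const 0, fun j hj => ?_⟩
  have : iteratedDeriv j (fun _ : ℝ => (0:ℝ)) = fun _ => 0 := by
    ext x; simp
  rw [this]; exact isBigO_zero _ _

lemma SN.mul {n : ℕ} : ∀ {μ ν : ℤ} {f g : ℝ → ℝ}, SN n μ f → SN n ν g →
    SN n (μ + ν) (fun x => f x * g x) := by
  induction n with
  | zero => intro μ ν f g hf hg; exact SN_zero (hf.1.mul hg.1) (bigO_mul hf.bigO hg.bigO)
  | succ n ih =>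
    intro μ ν f g hf hg
    refine SN_succ (hf.1.mul hg.1) (bigO_mul hf.bigO hg.bigO) ?_
    have h1 := ih hf.der (hg.le n.le_succ)
    have h2 := ih (hf.le n.le_succ) hg.der
    have h3 := (h1.mono (show _ ≤ μ + ν - 1 by omega)).add (h2.mono (show _ ≤ μ + ν - 1 by omega))
    refine h3.congr ?_
    filter_upwards [hf.1.diff, hg.1.diff] with x hx hy
    exact (deriv_fun_mul hx hy).symm

lemma SN_zpow (n : ℕ) : ∀ μ : ℤ, SN n μ (fun x => x ^ μ) := by
  induction n with
  | zero => intro μ; exact SN_zero (EvS.zpow μ) (isBigO_refl _ _)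
  | succ n ih =>
    intro μ
    refine SN_succ (EvS.zpow μ) (isBigO_refl _ _) ?_
    refine ((ih (μ - 1)).const_mul μ).congr (Eventually.of_forall fun x => ?_)
    exact (deriv_zpow μ x).symm

/-- composition of symbols -/
lemma SN.comp {n : ℕ} {g : ℝ → ℝ} {s : ℤ} {d : ℝ} (hd : d ≠ 0) (hgt : Tendsto g atTop atTop)
    (hgd : Tendsto (fun x => g x * x ^ (-s)) atTop (𝓝 d)) :
    ∀ {μ : ℤ} {f : ℝ → ℝ}, SN n s g → SN n μ f → SN n (s * μ) (fun x => f (g x)) := by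
  have key : ∀ {μ : ℤ} {f : ℝ → ℝ}, f =O[atTop] (fun x : ℝ => x ^ μ) →
      (fun x => f (g x)) =O[atTop] fun x : ℝ => x ^ (s * μ) := by
    intro μ f hf
    refine (hf.comp_tendsto hgt).trans ?_
    have h1 := (hgd.zpow₀ μ (Or.inl hd)).isBigO_one ℝ
    have h2 := h1.mul (isBigO_refl (fun x : ℝ => x ^ (s * μ)) atTop)
    refine h2.congr' ?_ (Eventually.of_forall fun x => by simp)
    filter_upwards [eventually_gt_atTop 0] with x hx
    simp only [Function.comp]
    rw [mul_zpow, mul_assoc, ← zpow_mul, ← zpow_add₀ hx.ne']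
    simp
  induction n with
  | zero => intro μ f hg hf; exact SN_zero (hf.1.comp hg.1 hgt) (key hf.bigO)
  | succ n ih =>
    intro μ f hg hf
    refine SN_succ (hf.1.comp hg.1 hgt) (key hf.bigO) ?_
    have h1 := (ih (hg.le n.le_succ) hf.der).mul hg.der
    refine (h1.mono (show _ ≤ s * μ - 1 by linarith [mul_sub s μ 1])).congr ?_
    filter_upwards [hgt.eventually hf.1.diff, hg.1.diff] with x hx hy
    exact (deriv_comp x hx hy).symm

lemma SN.inv {n : ℕ} {f : ℝ → ℝ} (hf : SN n 0 f) {c : ℝ} (hc : c ≠ 0)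
    (h : Tendsto f atTop (𝓝 c)) : SN n 0 (fun x => (f x)⁻¹) := by
  have hne : ∀ᶠ x in atTop, f x ≠ 0 := h.eventually_ne hc
  have hev : EvS (fun x => (f x)⁻¹) := by
    filter_upwards [hf.1, hne] with x hx h0 using hx.inv h0
  have hO : (fun x => (f x)⁻¹) =O[atTop] fun x : ℝ => x ^ (0:ℤ) := by
    simpa using (h.inv₀ hc).isBigO_one ℝ
  induction n with
  | zero => exact SN_zero hev hO
  | succ n ih =>
    refine SN_succ hev hO ?_
    have h1 := ih (hf.le n.le_succ)
    have h2 := (hf.der.mul (h1.mul h1)).const_mul (-1)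
    refine (h2.mono (by omega)).congr ?_
    filter_upwards [hf.1.diff, hne] with x hx h0
    rw [deriv_fun_inv'' hx h0]
    field_simp

lemma S.congr {μ : ℤ} {f g : ℝ → ℝ} (hf : S μ f) (h : f =ᶠ[atTop] g) : S μ g :=
  fun n => (hf n).congr h
lemma S.mono {μ ν : ℤ} {f : ℝ → ℝ} (hf : S μ f) (h : μ ≤ ν) : S ν f := fun n => (hf n).mono h
lemma S.evS {μ : ℤ} {f : ℝ → ℝ} (hf : S μ f) : EvS f := (hf 0).1
lemma S.bigO {μ : ℤ} {f : ℝ → ℝ} (hf : S μ f) : f =O[atTop] fun x : ℝ => x ^ μ := (hf 0).bigO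
lemma S.add {μ : ℤ} {f g : ℝ → ℝ} (hf : S μ f) (hg : S μ g) : S μ (fun x => f x + g x) :=
  fun n => (hf n).add (hg n)
lemma S.const_mul {μ : ℤ} {f : ℝ → ℝ} (c : ℝ) (hf : S μ f) : S μ (fun x => c * f x) :=
  fun n => (hf n).const_mul c
lemma S.sub {μ : ℤ} {f g : ℝ → ℝ} (hf : S μ f) (hg : S μ g) : S μ (fun x => f x - g x) := by
  refine (hf.add (hg.const_mul (-1))).congr (Eventually.of_forall fun x => ?_)
  simp only; ring
lemma S.mul {μ ν : ℤ} {f g : ℝ → ℝ} (hf : S μ f) (hg : S ν g) :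
    S (μ + ν) (fun x => f x * g x) := fun n => (hf n).mul (hg n)
lemma S.der {μ : ℤ} {f : ℝ → ℝ} (hf : S μ f) : S (μ - 1) (deriv f) := fun n => (hf (n+1)).der
lemma S_zero (μ : ℤ) : S μ (fun _ => 0) := fun n => SN_const_zero n μ
lemma S_zpow (μ : ℤ) : S μ (fun x => x ^ μ) := fun n => SN_zpow n μ

lemma S.tendsto {μ : ℤ} {f : ℝ → ℝ} (hf : S (μ - 1) f) :
    Tendsto (fun x => f x * x ^ (-μ)) atTop (𝓝 0) := by
  have h := bigO_mul hf.bigO (isBigO_refl (fun x : ℝ => x ^ (-μ)) atTop)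
  exact h.trans_tendsto (tendsto_zpow_atTop_zero (by omega))

/-- Laurent polynomials of degree at most `γ`. -/
def L (γ : ℤ) : Submodule ℝ (ℝ → ℝ) :=
  Submodule.span ℝ {f | ∃ n : ℤ, n ≤ γ ∧ f = fun x => x ^ n}

lemma L_zpow {γ n : ℤ} (h : n ≤ γ) : (fun x : ℝ => x ^ n) ∈ L γ :=
  Submodule.subset_span ⟨n, h, rfl⟩

lemma L_mono {γ δ : ℤ} (h : γ ≤ δ) : L γ ≤ L δ := by
  refine Submodule.span_mono ?_
  rintro f ⟨n, hn, rfl⟩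
  exact ⟨n, hn.trans h, rfl⟩

lemma L_S {γ : ℤ} {u : ℝ → ℝ} (h : u ∈ L γ) : S γ u := by
  induction h using Submodule.span_induction with
  | mem x h => obtain ⟨n, hn, rfl⟩ := h; exact (S_zpow n).mono hn
  | zero => exact S_zero γ
  | add x y hx hy h1 h2 => exact h1.add h2
  | smul a x hx h1 => exact h1.const_mul a

lemma L_split {γ : ℤ} {u : ℝ → ℝ} (h : u ∈ L γ) :
    ∃ c : ℝ, (fun x => u x - c * x ^ γ) ∈ L (γ - 1) := by
  induction h using Submodule.span_induction with
  | mem x h =>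
    obtain ⟨n, hn, rfl⟩ := h
    rcases hn.eq_or_lt with rfl | hlt
    · exact ⟨1, by simp only [one_mul, sub_self]; exact (L (n - 1)).zero_mem⟩
    · exact ⟨0, by simpa using L_zpow (by omega : n ≤ γ - 1)⟩
  | zero => exact ⟨0, by simp only [Pi.zero_apply, zero_mul, sub_self]; exact (L (γ - 1)).zero_mem⟩
  | add x y hx hy h1 h2 =>
    obtain ⟨c, hc⟩ := h1
    obtain ⟨d, hd⟩ := h2
    refine ⟨c + d, ?_⟩
    convert (L (γ - 1)).add_mem hc hd using 1
    ext t; simp; ring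
  | smul a x hx h1 =>
    obtain ⟨c, hc⟩ := h1
    refine ⟨a * c, ?_⟩
    convert (L (γ - 1)).smul_mem a hc using 1
    ext t; simp; ring

def A (γ : ℤ) (α : ℝ → ℝ) : Prop :=
  ∀ N : ℕ, ∃ u ∈ L γ, S (γ - N) (fun x => α x - u x)

lemma A_approx {γ : ℤ} {α : ℝ → ℝ}
    (h : ∀ N : ℕ, ∃ β, A γ β ∧ S (γ - N) (fun x => α x - β x)) : A γ α := by
  intro N
  obtain ⟨β, hβ, h1⟩ := h N
  obtain ⟨u, hu, h2⟩ := hβ N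
  refine ⟨u, hu, (h1.add h2).congr (Eventually.of_forall fun x => ?_)⟩
  simp only; ring

lemma A.congr {γ : ℤ} {α β : ℝ → ℝ} (h : A γ α) (he : α =ᶠ[atTop] β) : A γ β := by
  intro N
  obtain ⟨u, hu, h2⟩ := h N
  refine ⟨u, hu, h2.congr ?_⟩
  filter_upwards [he] with x hx
  rw [hx]

lemma A.mono {γ δ : ℤ} {α : ℝ → ℝ} (h : A γ α) (hl : γ ≤ δ) : A δ α := by
  intro N
  obtain ⟨u, hu, h2⟩ := h N
  exact ⟨u, L_mono hl hu, h2.mono (by omega)⟩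

lemma L_A {γ : ℤ} {u : ℝ → ℝ} (h : u ∈ L γ) : A γ u :=
  fun N => ⟨u, h, (S_zero _).congr (Eventually.of_forall fun x => by simp)⟩

lemma A.S {γ : ℤ} {α : ℝ → ℝ} (h : A γ α) : S γ α := by
  obtain ⟨u, hu, h2⟩ := h 0
  refine ((h2.mono (by simp)).add (L_S hu)).congr (Eventually.of_forall fun x => ?_)
  simp

lemma A_of_S {γ : ℤ} {α : ℝ → ℝ} (h : ∀ μ, CompB.S μ α) : A γ α :=
  fun N => ⟨0, (L γ).zero_mem, by simpa using h _⟩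

lemma A.add {γ : ℤ} {α β : ℝ → ℝ} (h : A γ α) (h' : A γ β) : A γ (fun x => α x + β x) := by
  intro N
  obtain ⟨u, hu, h1⟩ := h N
  obtain ⟨v, hv, h2⟩ := h' N
  refine ⟨u + v, (L γ).add_mem hu hv, (h1.add h2).congr (Eventually.of_forall fun x => ?_)⟩
  simp only [Pi.add_apply]; ring

lemma A.const_mul {γ : ℤ} {α : ℝ → ℝ} (c : ℝ) (h : A γ α) : A γ (fun x => c * α x) := by
  intro N
  obtain ⟨u, hu, h1⟩ := h N
  refine ⟨c • u, (L γ).smul_mem c hu, (h1.const_mul c).congr (Eventually.of_forall fun x => ?_)⟩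
  simp only [Pi.smul_apply, smul_eq_mul]; ring

lemma A_zero (γ : ℤ) : A γ (fun _ => 0) := L_A (L γ).zero_mem

lemma A_zpow (n : ℤ) : A n (fun x => x ^ n) := L_A (L_zpow le_rfl)

lemma A.sum {ι : Type} {γ : ℤ} {α : ι → ℝ → ℝ} (t : Finset ι) (h : ∀ i ∈ t, A γ (α i)) :
    A γ (fun x => ∑ i ∈ t, α i x) := by
  classical
  induction t using Finset.induction_on with
  | empty => simpa using A_zero γ
  | insert a t ha ih =>
    simp only [Finset.sum_insert ha]
    exact (h a (by simp)).add (ih fun i hi => h i (by simp [hi]))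

lemma L_mul_A {γ δ : ℤ} {u v : ℝ → ℝ} (hu : u ∈ L γ) (hv : v ∈ L δ) :
    A (γ + δ) (fun x => u x * v x) := by
  induction hu using Submodule.span_induction with
  | mem x h =>
    obtain ⟨n, hn, rfl⟩ := h
    induction hv using Submodule.span_induction with
    | mem y h =>
      obtain ⟨m, hm, rfl⟩ := h
      exact (L_A (L_zpow (by omega : n + m ≤ γ + δ))).congr (zpow_mul_ev n m).symm
    | zero => simpa using A_zero _
    | add x y hx hy h1 h2 => simpa [mul_add] using h1.add h2
    | smul a x hx h1 => simpa [mul_left_comm] using h1.const_mul a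
  | zero => simpa using A_zero _
  | add x y hx hy h1 h2 => simpa [add_mul] using h1.add h2
  | smul a x hx h1 => simpa [mul_assoc] using h1.const_mul a

lemma A.mul {γ δ : ℤ} {α β : ℝ → ℝ} (h : A γ α) (h' : A δ β) :
    A (γ + δ) (fun x => α x * β x) := by
  refine A_approx fun N => ?_
  obtain ⟨u, hu, h1⟩ := h N
  obtain ⟨v, hv, h2⟩ := h' N
  refine ⟨_, L_mul_A hu hv, ?_⟩
  have e1 := (h1.mul h'.S).mono (show _ ≤ γ + δ - N by omega)
  have e2 := ((L_S hu).mul h2).mono (show _ ≤ γ + δ - N by omega)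
  refine (e1.add e2).congr (Eventually.of_forall fun x => ?_)
  simp only; ring

lemma A.der {γ : ℤ} {α : ℝ → ℝ} (h : A γ α) : A (γ - 1) (deriv α) := by
  refine A_approx fun N => ?_
  obtain ⟨u, hu, h1⟩ := h N
  refine ⟨deriv u, ?_, ?_⟩
  · clear h1
    induction hu using Submodule.span_induction with
    | mem x h =>
      obtain ⟨n, hn, rfl⟩ := h
      refine (((A_zpow (n - 1)).mono (by omega)).const_mul n).congr
        (Eventually.of_forall fun x => ?_)
      exact (deriv_zpow n x).symm
    | zero =>
      refine (A_zero (γ - 1)).congr (Eventually.of_forall fun x => ?_)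
      exact (deriv_const x (0:ℝ)).symm
    | add x y hx hy h1 h2 =>
      refine (h1.add h2).congr ?_
      filter_upwards [(L_S hx).evS.diff, (L_S hy).evS.diff] with t h1 h2
      exact (deriv_add h1 h2).symm
    | smul a x hx h1 =>
      refine (h1.const_mul a).congr ?_
      filter_upwards [(L_S hx).evS.diff] with t h1
      exact (deriv_const_mul a h1).symm
  · refine (h1.der.mono (by omega)).congr ?_
    filter_upwards [(L_S hu).evS.diff, h.S.evS.diff] with t h1 h2
    exact deriv_fun_sub h2 h1

lemma A_split {γ : ℤ} {α : ℝ → ℝ} (h : A γ α) :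
    ∃ c : ℝ, A (γ - 1) (fun x => α x - c * x ^ γ) := by
  have key : ∀ N : ℕ, ∃ c : ℝ, ∃ v ∈ L (γ - 1),
      S (γ - 1 - N) (fun x => α x - c * x ^ γ - v x) := by
    intro N
    obtain ⟨u, hu, h1⟩ := h (N + 1)
    obtain ⟨c, hc⟩ := L_split hu
    refine ⟨c, _, hc, (h1.mono (by push_cast; omega)).congr (Eventually.of_forall fun x => ?_)⟩
    simp only; ring
  have lim : ∀ c : ℝ, S (γ - 1) (fun x => α x - c * x ^ γ) →
      Tendsto (fun x => α x * x ^ (-γ)) atTop (𝓝 c) := by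
    intro c hc
    have := hc.tendsto.add_const c
    rw [zero_add] at this
    refine this.congr' ?_
    filter_upwards [eventually_gt_atTop 0] with x hx
    have : x ^ γ ≠ 0 := (zpow_pos hx γ).ne'
    rw [zpow_neg]; field_simp; ring
  choose c v hv hS using key
  have hc : ∀ N, Tendsto (fun x => α x * x ^ (-γ)) atTop (𝓝 (c N)) := by
    intro N
    refine lim _ ((((hS N).mono (show _ ≤ γ - 1 by omega)).add (L_S (hv N))).congr
      (Eventually.of_forall fun x => ?_))
    simp
  refine ⟨c 0, fun N => ⟨v N, hv N, ?_⟩⟩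
  rw [tendsto_nhds_unique (hc 0) (hc N)]
  exact hS N

lemma S.lim {γ : ℤ} {α : ℝ → ℝ} {c : ℝ} (hc : S (γ - 1) (fun x => α x - c * x ^ γ)) :
      Tendsto (fun x => α x * x ^ (-γ)) atTop (𝓝 c) := by
  have := hc.tendsto.add_const c
  rw [zero_add] at this
  refine this.congr' ?_
  filter_upwards [eventually_gt_atTop 0] with x hx
  have : x ^ γ ≠ 0 := (zpow_pos hx γ).ne'
  rw [zpow_neg]; field_simp; ring

lemma A.split' {γ : ℤ} {α : ℝ → ℝ} (h : A γ α) {c : ℝ}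
    (hc : Tendsto (fun x => α x * x ^ (-γ)) atTop (𝓝 c)) :
    A (γ - 1) (fun x => α x - c * x ^ γ) := by
  obtain ⟨d, hd⟩ := A_split h
  rwa [tendsto_nhds_unique hc hd.S.lim]

/-- `A^(γ)` with leading coefficient `c` -/
def AL (γ : ℤ) (c : ℝ) (α : ℝ → ℝ) : Prop :=
  A γ α ∧ Tendsto (fun x => α x * x ^ (-γ)) atTop (𝓝 c)

lemma AL.congr {γ : ℤ} {c : ℝ} {α β : ℝ → ℝ} (h : AL γ c α) (he : α =ᶠ[atTop] β) : AL γ c β :=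
  ⟨h.1.congr he, h.2.congr' (by filter_upwards [he] with x hx; rw [hx])⟩

lemma AL.mul {γ δ : ℤ} {c d : ℝ} {α β : ℝ → ℝ} (h : AL γ c α) (h' : AL δ d β) :
    AL (γ + δ) (c * d) (fun x => α x * β x) := by
  refine ⟨h.1.mul h'.1, (h.2.mul h'.2).congr' ?_⟩
  filter_upwards [eventually_gt_atTop 0] with x hx
  rw [neg_add, zpow_add₀ hx.ne']; ring

lemma AL_one : AL 0 1 (fun _ => 1) :=
  ⟨by simpa using A_zpow 0, by simp⟩

lemma AL.pow {γ : ℤ} {c : ℝ} {α : ℝ → ℝ} (h : AL γ c α) (n : ℕ) :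
    AL (γ * n) (c ^ n) (fun x => α x ^ n) := by
  induction n with
  | zero => simpa using AL_one
  | succ n ih => 
    have := ih.mul h
    simp only [pow_succ]
    convert this using 1
    push_cast; ring

lemma AL.der {γ : ℤ} {c : ℝ} {α : ℝ → ℝ} (h : AL γ c α) : AL (γ - 1) (γ * c) (deriv α) := by
  refine ⟨h.1.der, S.lim ?_⟩
  refine ((h.1.split' h.2).der.S).congr ?_
  filter_upwards [h.1.S.evS.diff, (EvS.zpow γ).diff] with x hx hy
  rw [deriv_fun_sub hx (hy.const_mul c), deriv_const_mul c hy, deriv_zpow]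
  ring

lemma AL.ne {γ : ℤ} {c : ℝ} {α : ℝ → ℝ} (h : AL γ c α) (hc : c ≠ 0) :
    ∀ᶠ x in atTop, α x ≠ 0 := by
  filter_upwards [h.2.eventually_ne hc] with x hx
  exact left_ne_zero_of_mul hx

lemma A_inv_one {ε : ℝ → ℝ} (h : A (-1) ε) : A 0 (fun x => (1 - ε x)⁻¹) := by
  have hl : Tendsto (fun x => 1 - ε x) atTop (𝓝 1) := by
    have := (S.tendsto (μ := 0) (by simpa using h.S)).const_sub 1
    simpa using this
  have hA : A 0 (fun x => 1 - ε x) := by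
    refine (AL_one.1.add ((h.mono (by omega)).const_mul (-1))).congr
      (Eventually.of_forall fun x => ?_)
    simp only; ring
  have hS : S 0 (fun x => (1 - ε x)⁻¹) := fun n => (hA.S n).inv one_ne_zero hl
  have hp : ∀ i : ℕ, A (-i) (fun x => ε x ^ i) := by
    intro i
    induction i with
    | zero => simpa using AL_one.1
    | succ n ih =>
      simp only [pow_succ]
      convert ih.mul h using 1
      push_cast; ring
  refine A_approx fun N => ⟨fun x => ∑ i ∈ Finset.range N, ε x ^ i,
    A.sum _ fun i _ => (hp i).mono (by omega), ?_⟩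
  refine (((hp N).S.mul hS).mono (by omega)).congr ?_
  filter_upwards [hl.eventually_ne one_ne_zero] with x hx
  have := mul_neg_geom_sum (ε x) N
  field_simp
  linarith

lemma AL.inv {γ : ℤ} {c : ℝ} {α : ℝ → ℝ} (h : AL γ c α) (hc : c ≠ 0) :
    AL (-γ) c⁻¹ (fun x => (α x)⁻¹) := by
  constructor
  · have h1 : A (-1) (fun x => -c⁻¹ * ((α x - c * x ^ γ) * x ^ (-γ))) := by
      have := ((h.1.split' h.2).mul (A_zpow (-γ))).const_mul (-c⁻¹)
      convert this using 1; omega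
    have h2 := ((A_inv_one h1).mul (A_zpow (-γ))).const_mul c⁻¹
    rw [zero_add] at h2
    refine h2.congr ?_
    filter_upwards [eventually_gt_atTop 0, h.ne hc] with x hx h0
    have : x ^ γ ≠ 0 := (zpow_pos hx γ).ne'
    have e : 1 - -c⁻¹ * ((α x - c * x ^ γ) * x ^ (-γ)) = α x * c⁻¹ * (x ^ γ)⁻¹ := by
      rw [zpow_neg]; field_simp; ring
    rw [e, zpow_neg]; field_simp
  · refine (h.2.inv₀ hc).congr fun x => ?_
    rw [mul_inv, zpow_neg, zpow_neg, zpow_neg]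

lemma AL.zpow {γ : ℤ} {c : ℝ} {α : ℝ → ℝ} (h : AL γ c α) (hc : c ≠ 0) (n : ℤ) :
    AL (γ * n) (c ^ n) (fun x => α x ^ n) := by
  cases n with
  | ofNat k => simpa using h.pow k
  | negSucc k =>
    have := (h.pow (k + 1)).inv (pow_ne_zero _ hc)
    simp only [zpow_negSucc]
    convert this using 1
    rw [Int.negSucc_eq]; push_cast; ring

lemma A.comp {γ s : ℤ} {d : ℝ} {α g : ℝ → ℝ} (hs : 1 ≤ s) (hd : d ≠ 0)
    (hgt : Tendsto g atTop atTop) (hg : AL s d g) (h : A γ α) :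
    A (s * γ) (fun x => α (g x)) := by
  refine A_approx fun N => ?_
  obtain ⟨u, hu, h1⟩ := h N
  refine ⟨fun x => u (g x), ?_, ?_⟩
  · clear h1
    induction hu using Submodule.span_induction with
    | mem x h =>
      obtain ⟨n, hn, rfl⟩ := h
      exact (hg.zpow hd n).1.mono (by nlinarith)
    | zero => exact A_zero _
    | add x y hx hy h1 h2 => exact h1.add h2
    | smul a x hx h1 => exact h1.const_mul a
  · have : CompB.S (s * (γ - (N : ℤ))) (fun x => α (g x) - u (g x)) :=
      fun n => SN.comp (f := fun x => α x - u x) hd hgt hg.2 (hg.1.S n) (h1 n)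
    refine this.mono ?_
    have : (0:ℤ) ≤ (N : ℤ) := by omega
    nlinarith

lemma AL.comp {γ s : ℤ} {c d : ℝ} {α g : ℝ → ℝ} (hs : 1 ≤ s) (hd : d ≠ 0)
    (hgt : Tendsto g atTop atTop) (h : AL γ c α) (hg : AL s d g) :
    AL (s * γ) (c * d ^ γ) (fun x => α (g x)) := by
  refine ⟨h.1.comp hs hd hgt hg, ?_⟩
  refine ((h.2.comp hgt).mul (hg.zpow hd γ).2).congr' ?_
  filter_upwards [hgt.eventually (eventually_gt_atTop 0)] with x hx
  have : g x ^ γ ≠ 0 := (zpow_pos hx γ).ne'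
  simp only [Function.comp]
  rw [zpow_neg]; field_simp

lemma A.coeffs {γ : ℤ} {α : ℝ → ℝ} (h : A γ α) :
    ∃ c : ℕ → ℝ, ∀ N : ℕ,
      A (γ - N) (fun x => α x - ∑ i ∈ Finset.range N, c i * x ^ (γ - (i : ℤ))) := by
  classical
  let F : ℤ → (ℝ → ℝ) → ℝ := fun δ β =>
    if h : ∃ c : ℝ, A (δ - 1) (fun x => β x - c * x ^ δ) then h.choose else 0
  have hF : ∀ δ β, A δ β → A (δ - 1) (fun x => β x - F δ β * x ^ δ) := by
    intro δ β hβ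
    have h1 := A_split hβ
    simp only [F, dif_pos h1]
    exact h1.choose_spec
  let b : ℕ → ℝ → ℝ := fun n => Nat.rec α
    (fun k β => fun x => β x - F (γ - k) β * x ^ (γ - (k : ℤ))) n
  have hb : ∀ n : ℕ, b (n + 1) = fun x => b n x - F (γ - n) (b n) * x ^ (γ - (n : ℤ)) :=
    fun n => rfl
  refine ⟨fun i => F (γ - i) (b i), fun N => ?_⟩
  have hs : ∀ N : ℕ, (fun x => α x - ∑ i ∈ Finset.range N, F (γ - i) (b i) * x ^ (γ - (i : ℤ)))
      = b N := by
    intro N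
    induction N with
    | zero => simp [b]
    | succ n ih =>
      rw [hb]; ext x; rw [Finset.sum_range_succ, ← congrFun ih x]; ring
  rw [hs]
  induction N with
  | zero => simpa [b] using h
  | succ n ih =>
    rw [hb]
    convert hF _ _ ih using 1
    push_cast; ring

lemma iter_poly {γ : ℤ} {α : ℝ → ℝ} (c : ℕ → ℝ) (h : EvS α) (j N : ℕ) :
    iteratedDeriv j (fun x => α x - ∑ i ∈ Finset.range N, c i * x ^ (γ - (i : ℤ))) =ᶠ[atTop]
      fun x : ℝ => iteratedDeriv j α x -
        ∑ i ∈ Finset.range N, c i * (∏ l ∈ Finset.range j, ((γ : ℝ) - (i : ℝ) - (l : ℝ))) *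
          x ^ ((γ : ℝ) - (i : ℝ) - (j : ℝ)) := by
  have hz : ∀ᶠ x : ℝ in atTop, ∀ i ∈ Finset.range N,
      ContDiffAt ℝ (⊤ : ℕ∞) (fun x : ℝ => x ^ (γ - (i : ℤ))) x :=
    (Filter.eventually_all_finset _).2 fun i _ => EvS.zpow _
  filter_upwards [h, hz] with x hx hy
  have hle : ((j : ℕ∞) : WithTop ℕ∞) ≤ ((⊤ : ℕ∞) : WithTop ℕ∞) := by exact_mod_cast le_top
  have hy' : ∀ i ∈ Finset.range N,
      ContDiffAt ℝ j (fun x : ℝ => x ^ (γ - (i : ℤ))) x := fun i hi => (hy i hi).of_le hle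
  have hc : ∀ i ∈ Finset.range N,
      ContDiffAt ℝ j (fun x : ℝ => c i * x ^ (γ - (i : ℤ))) x :=
    fun i hi => contDiffAt_const.mul (hy' i hi)
  have := iteratedDeriv_sub (n := j) (x := x) (f := α)
    (g := fun x => ∑ i ∈ Finset.range N, c i * x ^ (γ - (i : ℤ))) (hx.of_le hle)
    (ContDiffAt.sum hc)
  refine this.trans ?_
  congr 1
  rw [iteratedDeriv_fun_sum hc]
  refine Finset.sum_congr rfl fun i hi => ?_
  rw [iteratedDeriv_const_mul _ (hy' i hi), iteratedDeriv_eq_iterate, iter_deriv_zpow, mul_assoc]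
  have e : ((γ : ℝ) - (i : ℝ) - (j : ℝ)) = ((γ - i - j : ℤ) : ℝ) := by push_cast; ring
  rw [e, Real.rpow_intCast]
  push_cast
  rfl

lemma hasExp_iff {γ : ℤ} {α : ℝ → ℝ} (c : ℕ → ℝ) :
    HasExpA (γ : ℝ) c α ↔
      ∀ N : ℕ, S (γ - N) (fun x => α x - ∑ i ∈ Finset.range N, c i * x ^ (γ - (i : ℤ))) := by
  have e : ∀ N j : ℕ, (fun x : ℝ => x ^ ((γ : ℝ) - (N : ℝ) - (j : ℝ))) =
      fun x : ℝ => x ^ (γ - (N : ℤ) - (j : ℤ)) := by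
    intro N j
    ext x
    rw [← Real.rpow_intCast]; push_cast; rfl
  constructor
  · rintro ⟨⟨a, ha, hs⟩, h⟩ N n
    have hα : EvS α := by
      filter_upwards [eventually_gt_atTop a] with x hx using hs x hx
    refine ⟨?_, fun j _ => ?_⟩
    · have : S γ (fun x => ∑ i ∈ Finset.range N, c i * x ^ (γ - (i : ℤ))) :=
        (A.sum _ fun (i : ℕ) _ => ((A_zpow (γ - i)).mono (by omega)).const_mul (c i)).S
      filter_upwards [hα, this.evS] with x h1 h2 using h1.sub h2
    · have h1 := h j N
      rw [e] at h1
      exact h1.congr' (iter_poly c hα j N).symm EventuallyEq.rfl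
  · intro h
    have hα : EvS α := by simpa using (h 0).evS
    constructor
    · obtain ⟨a, ha⟩ := eventually_atTop.1 hα
      exact ⟨max a 1, by simp, fun x hx => ha x (le_of_lt (lt_of_le_of_lt (le_max_left _ _) hx))⟩
    · intro j N
      rw [e]
      exact ((h N j).2 j le_rfl).congr' (iter_poly c hα j N) EventuallyEq.rfl

lemma AL_of_MemAS {γ : ℤ} {α : ℝ → ℝ} (h : MemAS (γ : ℝ) α) : ∃ c, c ≠ 0 ∧ AL γ c α := by
  obtain ⟨c, hc, hE⟩ := h
  rw [hasExp_iff] at hE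
  refine ⟨c 0, hc, fun N => ⟨_, ?_, hE N⟩, S.lim ?_⟩
  · have : (fun x : ℝ => ∑ i ∈ Finset.range N, c i * x ^ (γ - (i : ℤ))) =
      ∑ i ∈ Finset.range N, c i • (fun x : ℝ => x ^ (γ - (i : ℤ))) := by
      ext x; simp
    rw [this]
    exact Submodule.sum_mem _ fun i _ => Submodule.smul_mem _ _ (L_zpow (by omega))
  · simpa using hE 1

lemma MemAS_of_AL {γ : ℤ} {c : ℝ} {α : ℝ → ℝ} (h : AL γ c α) (hc : c ≠ 0) :
    MemAS (γ : ℝ) α := by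
  obtain ⟨d, hd⟩ := h.1.coeffs
  refine ⟨d, ?_, (hasExp_iff d).2 fun N => (hd N).S⟩
  have h1 : Tendsto (fun x => α x * x ^ (-γ)) atTop (𝓝 (d 0)) :=
    S.lim (by simpa using (hd 1).S)
  rwa [tendsto_nhds_unique h1 h.2]

def Empt (p : ℝ → ℝ) : Prop :=
  (∀ᶠ x in atTop, ContDiffAt ℝ (⊤ : ℕ∞) p x) ∧
        ∀ μ : ℝ, 0 < μ → ∀ j : ℕ,
          (iteratedDeriv j p) =O[atTop] fun x : ℝ => x ^ (-μ)

lemma rpow_bigO {a b : ℝ} (h : a ≤ b) :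
    (fun x : ℝ => x ^ a) =O[atTop] fun x : ℝ => x ^ b := by
  refine IsBigO.of_bound 1 ?_
  filter_upwards [eventually_ge_atTop 1] with x hx
  have h0 : 0 < x := by linarith
  rw [Real.norm_of_nonneg (by positivity), Real.norm_of_nonneg (by positivity), one_mul]
  exact Real.rpow_le_rpow_of_exponent_le hx h

lemma Empt_S {p : ℝ → ℝ} (h : Empt p) (μ : ℤ) : S μ p := by
  refine fun n => ⟨h.1, fun j _ => ?_⟩
  refine (h.2 (|((μ - j : ℤ) : ℝ)| + 1) (by positivity) j).trans ?_
  have := rpow_bigO (a := -(|((μ - j : ℤ) : ℝ)| + 1)) (b := ((μ - j : ℤ) : ℝ))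
    (by linarith [neg_abs_le ((μ - j : ℤ) : ℝ)])
  simpa only [Real.rpow_intCast] using this

lemma S_Empt {p : ℝ → ℝ} (h : ∀ μ, S μ p) : Empt p := by
  refine ⟨(h 0).evS, fun μ _ j => ?_⟩
  have h1 := (h (j + ⌊-μ⌋) j).2 j le_rfl
  refine h1.trans ?_
  have := rpow_bigO (Int.floor_le (-μ))
  simpa using this

lemma A_cases {γ : ℤ} {α : ℝ → ℝ} (h : A γ α) :
    Empt α ∨ ∃ i : ℤ, i ≤ γ ∧ MemAS (i : ℝ) α := by
  classical
  obtain ⟨c, hc⟩ := h.coeffs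
  by_cases h0 : ∃ n, c n ≠ 0
  · right
    have h1 := Nat.find_spec h0
    have h2 : ∀ i < Nat.find h0, c i = 0 := fun i hi => by
      simpa using Nat.find_min h0 hi
    set n := Nat.find h0
    have hz : ∀ x : ℝ, ∑ i ∈ Finset.range n, c i * x ^ (γ - (i : ℤ)) = 0 := fun x =>
      Finset.sum_eq_zero fun i hi => by rw [h2 i (Finset.mem_range.1 hi), zero_mul]
    have e1 := hc n
    have e2 := (hc (n + 1)).S
    simp only [Finset.sum_range_succ, hz, sub_zero, zero_add] at e1 e2
    refine ⟨γ - n, by omega, MemAS_of_AL (c := c n) ⟨e1, S.lim ?_⟩ h1⟩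
    exact e2.mono (by push_cast; omega)
  · left
    push Not at h0
    refine S_Empt fun μ => ?_
    have := (hc (γ - μ).toNat).S
    simp only [h0, zero_mul, Finset.sum_const_zero, sub_zero] at this
    exact this.mono (by omega)

lemma chain {f g : ℝ → ℝ} {s : ℤ} {d : ℝ} (hs : 1 ≤ s) (hd : d ≠ 0) (hf : EvS f)
    (hgt : Tendsto g atTop atTop) (hg : AL s d g) (k : ℕ) :
    ∃ q : ℕ → ℝ → ℝ, (∀ j : ℕ, A ((j + 1) - (k + 1) * s) (q j)) ∧
      (∀ j, k < j → q j = fun _ => 0) ∧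
      (∃ c, c ≠ 0 ∧ AL ((k + 1) - (k + 1) * s) c (q k)) ∧
      ∀ᶠ x in atTop, iteratedDeriv (k + 1) f (g x) =
        ∑ j ∈ Finset.range (k + 1), q j x * iteratedDeriv (j + 1) (fun x => f (g x)) x := by
  have hg' : AL (s - 1) (s * d) (deriv g) := hg.der
  have hsd : (s : ℝ) * d ≠ 0 := mul_ne_zero (by exact_mod_cast (by omega : s ≠ 0)) hd
  have hgi := hg'.inv hsd
  have hne := hg'.ne hsd
  have hgd := hg.1.S.evS.diff
  have hφ : EvS (fun x => f (g x)) := hf.comp hg.1.S.evS hgt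
  have iter : ∀ {h : ℝ → ℝ}, EvS h → ∀ n, EvS (iteratedDeriv n h) := by
    intro h hh n
    induction n with
    | zero => simpa using hh
    | succ n ih => rw [iteratedDeriv_succ]; exact ih.der
  induction k with
  | zero =>
    refine ⟨fun j => if j = 0 then fun x => (deriv g x)⁻¹ else fun _ => 0, ?_, ?_, ?_, ?_⟩
    · intro j
      rcases j with _ | j
      · simpa using hgi.1.mono (by omega)
      · simpa using A_zero _
    · intro j hj
      simp [hj.ne']
    · refine ⟨_, inv_ne_zero hsd, ?_⟩
      convert hgi using 1
      · simp
      · simp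
    · filter_upwards [hgt.eventually hf.diff, hgd, hne] with x h1 h2 h3
      have : deriv (fun x => f (g x)) x = deriv f (g x) * deriv g x := deriv_comp x h1 h2
      simp only [zero_add, Finset.sum_range_one, if_true, iteratedDeriv_one, this]
      field_simp
  | succ k ih =>
    obtain ⟨q, hA, hz, ⟨c, hc, hL⟩, he⟩ := ih
    let Q : ℕ → ℝ → ℝ := fun j => match j with
      | 0 => fun x => deriv (q 0) x * (deriv g x)⁻¹
      | j + 1 => fun x => (deriv (q (j + 1)) x + q j x) * (deriv g x)⁻¹
    refine ⟨Q, ?_, ?_, ?_, ?_⟩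
    · intro j
      rcases j with _ | j
      · refine ((hA 0).der.mul hgi.1).mono ?_
        push_cast; linarith
      · refine ((((hA (j + 1)).der.mono ?_).add (hA j)).mul hgi.1).mono ?_
        · push_cast; linarith
        · push_cast; linarith
    · intro j hj
      rcases j with _ | j
      · omega
      · ext x
        simp [Q, hz (j + 1) (by omega), hz j (by omega)]
    · refine ⟨_, mul_ne_zero hc (inv_ne_zero hsd), ?_⟩
      convert (hL.mul hgi) using 1
      · push_cast; ring
      · ext x
        simp [Q, hz (k + 1) (by omega)]
    · have hd1 := ev_deriv he
      have hq : ∀ᶠ x in atTop, ∀ j ∈ Finset.range (k + 1), DifferentiableAt ℝ (q j) x ∧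
          DifferentiableAt ℝ (iteratedDeriv (j + 1) (fun x => f (g x))) x := by
        refine (Filter.eventually_all_finset _).2 fun j _ => ?_
        exact (hA j).S.evS.diff.and (iter hφ (j + 1)).diff
      filter_upwards [hd1, hq, hgt.eventually (iter hf (k + 1)).diff, hgd, hne]
        with x h1 h2 h3 h4 h5
      have e1 : deriv (fun x => iteratedDeriv (k + 1) f (g x)) x =
        deriv (iteratedDeriv (k + 1) f) (g x) * deriv g x := deriv_comp x h3 h4
      rw [e1, deriv_fun_sum (fun j hj => (h2 j hj).1.fun_mul (h2 j hj).2)] at h1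
      have e2 : ∀ j ∈ Finset.range (k + 1),
          deriv (fun x => q j x * iteratedDeriv (j + 1) (fun x => f (g x)) x) x =
          deriv (q j) x * iteratedDeriv (j + 1) (fun x => f (g x)) x +
          q j x * iteratedDeriv (j + 2) (fun x => f (g x)) x := by
        intro j hj
        rw [deriv_fun_mul (h2 j hj).1 (h2 j hj).2, iteratedDeriv_succ (n := j + 1)]
      rw [Finset.sum_congr rfl e2, Finset.sum_add_distrib] at h1
      have e3 : ∑ j ∈ Finset.range (k + 1),
          deriv (q j) x * iteratedDeriv (j + 1) (fun x => f (g x)) x =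
          ∑ j ∈ Finset.range (k + 2),
          deriv (q j) x * iteratedDeriv (j + 1) (fun x => f (g x)) x := by
        rw [Finset.sum_range_succ _ (k + 1), hz (k + 1) (by omega)]
        simp
      rw [e3, Finset.sum_range_succ' _ (k + 1)] at h1
      rw [iteratedDeriv_succ (n := k + 1), Finset.sum_range_succ' _ (k + 1)]
      have e4 : deriv (iteratedDeriv (k + 1) f) (g x) =
        (deriv (iteratedDeriv (k + 1) f) (g x) * deriv g x) * (deriv g x)⁻¹ := by field_simp
      rw [e4, h1]
      simp only [Q, add_mul, Finset.sum_add_distrib, Finset.sum_mul]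
      have e5 : ∀ a b c : ℝ, a * b * c = a * c * b := fun a b c => by ring
      simp only [e5 _ _ (deriv g x)⁻¹]
      ring

end CompB

/-- If `f ∈ B^(m)` (`m` a positive integer) and `g ∈ X^(s)` strictly for a
positive integer `s`, with `g(x) > 0` for all large `x` and `g(x) → +∞`, then
`φ(x) = f(g(x))` belongs to `B^(m)` as well. -/
theorem composition_mem_B (m : ℕ) (hm : 0 < m) (f : ℝ → ℝ) (hf : MemB m f)
    (s : ℕ) (hs : 0 < s) (g : ℝ → ℝ) (hg : MemXS (s : ℝ) g)
    (hgpos : ∀ᶠ x in atTop, 0 < g x)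
    (hgtop : Tendsto g atTop atTop) :
    MemB m (fun x => f (g x)) := by
  classical
  obtain ⟨hfS, p, hfe, hp1, i, him, hpm⟩ := hf
  obtain ⟨d, hd, hgA⟩ : ∃ d, d ≠ 0 ∧ CompB.AL (s : ℤ) d g := CompB.AL_of_MemAS (by simpa using hg.1)
  have hs1 : (1 : ℤ) ≤ s := by omega
  choose q hqA hqz hqL hqe using fun k => CompB.chain hs1 hd hfS hgtop hgA k
  obtain ⟨cm, hcm, hpmA⟩ := CompB.AL_of_MemAS hpm
  have hpA : ∀ k ∈ Finset.range m, CompB.A ((k : ℤ) + 1) (p (k + 1)) := by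
    intro k hk
    rw [Finset.mem_range] at hk
    by_cases hkm : k + 1 = m
    · rw [hkm]; exact hpmA.1.mono (by omega)
    · rcases hp1 (k + 1) (Finset.mem_Icc.2 ⟨by omega, by omega⟩) with h | ⟨i', hi', h⟩
      · exact CompB.A_of_S (CompB.Empt_S h)
      · obtain ⟨_, _, h1⟩ := CompB.AL_of_MemAS h
        exact h1.1.mono (by push_cast at hi'; omega)
  have hPA : ∀ j : ℕ, CompB.A ((j : ℤ) + 1)
      (fun x => ∑ k ∈ Finset.range m, p (k + 1) (g x) * q k j x) := by
    intro j
    refine CompB.A.sum _ fun k hk => ?_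
    refine (((hpA k hk).comp hs1 hd hgtop hgA).mul (hqA k j)).mono ?_
    linarith
  refine ⟨CompB.EvS.comp hfS hgA.1.S.evS hgtop,
    fun j x => ∑ k ∈ Finset.range m, p (k + 1) (g x) * q k (j - 1) x, ?_, ?_, ?_⟩
  · have hall : ∀ᶠ x in atTop, ∀ k ∈ Finset.range m, iteratedDeriv (k + 1) f (g x) =
        ∑ j ∈ Finset.range (k + 1), q k j x * iteratedDeriv (j + 1) (fun x => f (g x)) x :=
      (Filter.eventually_all_finset _).2 fun k _ => hqe k
    have hIcc : ∀ F : ℕ → ℝ, ∑ k ∈ Finset.Icc 1 m, F k = ∑ k ∈ Finset.range m, F (k + 1) := by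
      intro F
      rw [Finset.range_eq_Ico, Finset.sum_Ico_add' F 0 m 1]
      rfl
    filter_upwards [hgtop.eventually hfe, hall] with x h1 h2
    rw [hIcc] at h1 ⊢
    rw [h1]
    simp only [Nat.add_sub_cancel, Finset.sum_mul]
    rw [Finset.sum_comm]
    refine Finset.sum_congr rfl fun k hk => ?_
    rw [h2 k hk, Finset.mul_sum]
    rw [Finset.mem_range] at hk
    rw [Finset.sum_subset (Finset.range_subset_range.2 (by omega : k + 1 ≤ m))]
    · exact Finset.sum_congr rfl fun j _ => by ring
    · intro j _ hj
      rw [hqz k j (by simpa using hj)]; simp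
  · intro k hk
    rw [Finset.mem_Icc] at hk
    have := CompB.A_cases (hPA (k - 1))
    have e : ((k - 1 : ℕ) : ℤ) + 1 = k := by omega
    rw [e] at this
    exact this
  · obtain ⟨c, hc, hL⟩ := hqL (m - 1)
    have e : ((m - 1 : ℕ) : ℤ) + 1 = m := by omega
    rw [e] at hL
    have h1 := (hpmA.comp hs1 hd hgtop hgA).mul hL
    refine ⟨_, ?_, CompB.MemAS_of_AL (h1.congr (Eventually.of_forall fun x => ?_))
      (mul_ne_zero (mul_ne_zero hcm (zpow_ne_zero _ hd)) hc)⟩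
    · nlinarith
    · simp only
      rw [Finset.sum_eq_single (m - 1)]
      · rw [Nat.sub_add_cancel hm]
      · intro k hk hne
        rw [Finset.mem_range] at hk
        rw [hqz k (m - 1) (by omega)]; simp
      · intro h; exact absurd (Finset.mem_range.2 (by omega)) h
end
end

section
/- If α ∈ A^(γ) strictly, and β ∈ A^(k) strictly for some positive integer k with β(x) > 0 for all large x > 0, then the composition θ(x) = α(β(x)) belongs to A^(kγ) strictly. -/
open Filter Finset Real

noncomputable section

/-- eventually smooth -/
def Sm (f : ℝ → ℝ) : Prop := ∀ᶠ x in atTop, ContDiffAt ℝ (⊤ : ℕ∞) f x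

/-- recursive symbol bounds -/
def BB : ℕ → ℝ → (ℝ → ℝ) → Prop
  | 0, m, f => Sm f ∧ f =O[atTop] fun x : ℝ => x ^ m
  | n + 1, m, f => (Sm f ∧ f =O[atTop] fun x : ℝ => x ^ m) ∧ BB n (m - 1) (deriv f)

/-- symbols of order m -/
def SS (m : ℝ) (f : ℝ → ℝ) : Prop := ∀ n, BB n m f

lemma evEq_nhds {f g : ℝ → ℝ} (h : f =ᶠ[atTop] g) : ∀ᶠ x in atTop, f =ᶠ[nhds x] g := by
  obtain ⟨a, ha⟩ := eventually_atTop.1 h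
  filter_upwards [eventually_gt_atTop a] with x hx
  filter_upwards [Ioi_mem_nhds hx] with y hy
  exact ha y (le_of_lt hy)

lemma evEq_deriv {f g : ℝ → ℝ} (h : f =ᶠ[atTop] g) : deriv f =ᶠ[atTop] deriv g := by
  filter_upwards [evEq_nhds h] with x hx
  exact hx.deriv_eq

lemma Sm.congr {f g : ℝ → ℝ} (hf : Sm f) (h : f =ᶠ[atTop] g) : Sm g := by
  filter_upwards [hf, evEq_nhds h] with x hx hx2
  exact hx.congr_of_eventuallyEq hx2.symm

lemma Sm.deriv {f : ℝ → ℝ} (hf : Sm f) : Sm (deriv f) := by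
  filter_upwards [hf] with x hx
  exact hx.derivWithin (by simp)

lemma Sm.add {f g : ℝ → ℝ} (hf : Sm f) (hg : Sm g) : Sm (fun x => f x + g x) := by
  filter_upwards [hf, hg] with x hx hx2
  exact hx.add hx2

lemma Sm.sub {f g : ℝ → ℝ} (hf : Sm f) (hg : Sm g) : Sm (fun x => f x - g x) := by
  filter_upwards [hf, hg] with x hx hx2
  exact hx.sub hx2

lemma Sm.mul {f g : ℝ → ℝ} (hf : Sm f) (hg : Sm g) : Sm (fun x => f x * g x) := by
  filter_upwards [hf, hg] with x hx hx2
  exact hx.mul hx2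

lemma Sm.diff {f : ℝ → ℝ} (hf : Sm f) : ∀ᶠ x in atTop, DifferentiableAt ℝ f x := by
  filter_upwards [hf] with x hx
  exact hx.differentiableAt (by simp)

lemma Sm.rpow (s : ℝ) : Sm (fun x => x ^ s) := by
  filter_upwards [eventually_gt_atTop 0] with x hx
  exact Real.contDiffAt_rpow_const_of_ne hx.ne'

lemma Sm.const (c : ℝ) : Sm (fun _ => c) := Eventually.of_forall fun _ => contDiffAt_const

lemma rpow_bigO {m m' : ℝ} (h : m ≤ m') :
    (fun x : ℝ => x ^ m) =O[atTop] fun x : ℝ => x ^ m' := by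
  refine Asymptotics.IsBigO.of_bound 1 ?_
  filter_upwards [eventually_ge_atTop 1] with x hx
  rw [Real.norm_of_nonneg (by positivity), Real.norm_of_nonneg (by positivity), one_mul]
  exact Real.rpow_le_rpow_of_exponent_le hx h

lemma BB.sm {n : ℕ} {m : ℝ} {f : ℝ → ℝ} (h : BB n m f) : Sm f := by
  cases n with
  | zero => exact h.1
  | succ n => exact h.1.1

lemma BB.bigO {n : ℕ} {m : ℝ} {f : ℝ → ℝ} (h : BB n m f) : f =O[atTop] fun x : ℝ => x ^ m := by
  cases n with
  | zero => exact h.2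
  | succ n => exact h.1.2

lemma BB.congr {n : ℕ} : ∀ {m : ℝ} {f g : ℝ → ℝ}, BB n m f → f =ᶠ[atTop] g → BB n m g := by
  induction n with
  | zero => intro m f g h e; exact ⟨h.1.congr e, h.2.congr' e EventuallyEq.rfl⟩
  | succ n ih =>
    intro m f g h e
    exact ⟨⟨h.1.1.congr e, h.1.2.congr' e EventuallyEq.rfl⟩, ih h.2 (evEq_deriv e)⟩

lemma BB.mono {n : ℕ} : ∀ {m m' : ℝ} {f : ℝ → ℝ}, BB n m f → m ≤ m' → BB n m' f := by
  induction n with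
  | zero => intro m m' f h e; exact ⟨h.1, h.2.trans (rpow_bigO e)⟩
  | succ n ih =>
    intro m m' f h e
    exact ⟨⟨h.1.1, h.1.2.trans (rpow_bigO e)⟩, ih h.2 (by linarith)⟩

lemma BB.pred {n : ℕ} : ∀ {m : ℝ} {f : ℝ → ℝ}, BB (n + 1) m f → BB n m f := by
  induction n with
  | zero => intro m f h; exact h.1
  | succ n ih => intro m f h; exact ⟨h.1, ih h.2⟩

lemma BB.add {n : ℕ} : ∀ {m : ℝ} {f g : ℝ → ℝ}, BB n m f → BB n m g →
    BB n m (fun x => f x + g x) := by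
  induction n with
  | zero => intro m f g h k; exact ⟨h.1.add k.1, h.2.add k.2⟩
  | succ n ih =>
    intro m f g h k
    refine ⟨⟨h.1.1.add k.1.1, h.1.2.add k.1.2⟩, (ih h.2 k.2).congr ?_⟩
    filter_upwards [h.1.1.diff, k.1.1.diff] with x hx kx
    exact (deriv_fun_add hx kx).symm

lemma rpow_mul_ev (a b : ℝ) : (fun x : ℝ => x ^ a * x ^ b) =ᶠ[atTop] fun x => x ^ (a + b) := by
  filter_upwards [eventually_gt_atTop 0] with x hx
  exact (Real.rpow_add hx a b).symm

lemma bigO_mul {a b : ℝ} {f g : ℝ → ℝ} (hf : f =O[atTop] fun x : ℝ => x ^ a)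
    (hg : g =O[atTop] fun x : ℝ => x ^ b) :
    (fun x => f x * g x) =O[atTop] fun x : ℝ => x ^ (a + b) :=
  (hf.mul hg).congr' EventuallyEq.rfl (rpow_mul_ev a b)

lemma BB.mul {n : ℕ} : ∀ {a b : ℝ} {f g : ℝ → ℝ}, BB n a f → BB n b g →
    BB n (a + b) (fun x => f x * g x) := by
  induction n with
  | zero => intro a b f g h k; exact ⟨h.1.mul k.1, bigO_mul h.2 k.2⟩
  | succ n ih =>
    intro a b f g h k
    refine ⟨⟨h.1.1.mul k.1.1, bigO_mul h.1.2 k.1.2⟩, ?_⟩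
    have h1 : BB n (a + b - 1) (fun x => deriv f x * g x) := by
      have := ih h.2 k.pred
      rwa [show a - 1 + b = a + b - 1 by ring] at this
    have h2 : BB n (a + b - 1) (fun x => f x * deriv g x) := by
      have := ih h.pred k.2
      rwa [show a + (b - 1) = a + b - 1 by ring] at this
    refine (h1.add h2).congr ?_
    filter_upwards [h.1.1.diff, k.1.1.diff] with x hx kx
    exact (deriv_fun_mul hx kx).symm

lemma BB.zero {n : ℕ} : ∀ {m : ℝ}, BB n m (fun _ => 0) := by
  induction n with
  | zero => intro m; exact ⟨Sm.const 0, Asymptotics.isBigO_zero _ _⟩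
  | succ n ih =>
    intro m
    refine ⟨⟨Sm.const 0, Asymptotics.isBigO_zero _ _⟩, ih.congr ?_⟩
    exact Eventually.of_forall fun x => by simp

lemma BB.const {n : ℕ} (c : ℝ) : BB n 0 (fun _ => c) := by
  have : (fun _ : ℝ => c) =O[atTop] fun x : ℝ => x ^ (0 : ℝ) := by
    simp only [Real.rpow_zero]
    exact Asymptotics.isBigO_const_const _ one_ne_zero _
  cases n with
  | zero => exact ⟨Sm.const c, this⟩
  | succ n =>
    refine ⟨⟨Sm.const c, this⟩, BB.zero.congr ?_⟩
    exact Eventually.of_forall fun x => by simp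

lemma BB.const_mul {n : ℕ} {m : ℝ} {f : ℝ → ℝ} (h : BB n m f) (c : ℝ) :
    BB n m (fun x => c * f x) := by
  have := (BB.const (n := n) c).mul h
  rwa [zero_add] at this

lemma BB.rpow {n : ℕ} : ∀ s : ℝ, BB n s (fun x => x ^ s) := by
  induction n with
  | zero => intro s; exact ⟨Sm.rpow s, Asymptotics.isBigO_refl _ _⟩
  | succ n ih =>
    intro s
    refine ⟨⟨Sm.rpow s, Asymptotics.isBigO_refl _ _⟩, ((ih (s - 1)).const_mul s).congr ?_⟩
    exact Eventually.of_forall fun x => by simp [Real.deriv_rpow_const]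

lemma SS.congr {m : ℝ} {f g : ℝ → ℝ} (h : SS m f) (e : f =ᶠ[atTop] g) : SS m g :=
  fun n => (h n).congr e
lemma SS.mono {m m' : ℝ} {f : ℝ → ℝ} (h : SS m f) (e : m ≤ m') : SS m' f :=
  fun n => (h n).mono e
lemma SS.add {m : ℝ} {f g : ℝ → ℝ} (h : SS m f) (k : SS m g) : SS m (fun x => f x + g x) :=
  fun n => (h n).add (k n)
lemma SS.const_mul {m : ℝ} {f : ℝ → ℝ} (h : SS m f) (c : ℝ) : SS m (fun x => c * f x) :=
  fun n => (h n).const_mul c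
lemma SS.sub {m : ℝ} {f g : ℝ → ℝ} (h : SS m f) (k : SS m g) : SS m (fun x => f x - g x) :=
  (h.add (k.const_mul (-1))).congr (Eventually.of_forall fun x => by simp; ring)
lemma SS.mul {a b : ℝ} {f g : ℝ → ℝ} (h : SS a f) (k : SS b g) :
    SS (a + b) (fun x => f x * g x) := fun n => (h n).mul (k n)
lemma SS.rpow (s : ℝ) : SS s (fun x => x ^ s) := fun _ => BB.rpow s
lemma SS.const (c : ℝ) : SS 0 (fun _ => c) := fun _ => BB.const c
lemma SS.sm {m : ℝ} {f : ℝ → ℝ} (h : SS m f) : Sm f := (h 0).sm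
lemma SS.bigO {m : ℝ} {f : ℝ → ℝ} (h : SS m f) : f =O[atTop] fun x : ℝ => x ^ m := (h 0).bigO

lemma SS_iff {m : ℝ} {f : ℝ → ℝ} :
    SS m f ↔ Sm f ∧ ∀ j : ℕ, iteratedDeriv j f =O[atTop] fun x : ℝ => x ^ (m - (j : ℝ)) := by
  constructor
  · intro h
    refine ⟨h.sm, fun j => ?_⟩
    have : ∀ j : ℕ, ∀ (m : ℝ) (f : ℝ → ℝ), BB j m f →
        iteratedDeriv j f =O[atTop] fun x : ℝ => x ^ (m - (j : ℝ)) := by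
      intro j
      induction j with
      | zero => intro m f h; simpa using h.2
      | succ j ih =>
        intro m f h
        rw [iteratedDeriv_succ']
        have := ih _ _ h.2
        rwa [show m - 1 - (j : ℝ) = m - ((j + 1 : ℕ) : ℝ) by push_cast; ring] at this
    exact this j m f (h j)
  · rintro ⟨h1, h2⟩ n
    induction n generalizing m f with
    | zero => exact ⟨h1, by simpa using h2 0⟩
    | succ n ih =>
      refine ⟨⟨h1, by simpa using h2 0⟩, ih h1.deriv fun j => ?_⟩
      have := h2 (j + 1)
      rw [iteratedDeriv_succ'] at this
      rwa [show m - 1 - (j : ℝ) = m - ((j + 1 : ℕ) : ℝ) by push_cast; ring]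

/-- truncated expansion -/
def TT (γ : ℝ) (c : ℕ → ℝ) (N : ℕ) (x : ℝ) : ℝ := ∑ i ∈ Finset.range N, c i * x ^ (γ - (i : ℝ))

lemma TT_smooth (γ : ℝ) (c : ℕ → ℝ) (N : ℕ) : Sm (TT γ c N) := by
  filter_upwards [eventually_gt_atTop 0] with x hx
  unfold TT
  exact ContDiffAt.sum fun i _ => contDiffAt_const.mul
    (Real.contDiffAt_rpow_const_of_ne hx.ne')

lemma TT_iter (γ : ℝ) (c : ℕ → ℝ) (N j : ℕ) {x : ℝ} (hx : 0 < x) :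
    iteratedDeriv j (TT γ c N) x = ∑ i ∈ Finset.range N,
          c i * (∏ l ∈ Finset.range j, (γ - (i : ℝ) - (l : ℝ))) * x ^ (γ - (i : ℝ) - (j : ℝ)) := by
  unfold TT
  rw [iteratedDeriv_fun_sum fun i _ => contDiffAt_const.mul
    (Real.contDiffAt_rpow_const_of_ne hx.ne')]
  refine Finset.sum_congr rfl fun i _ => ?_
  rw [iteratedDeriv_const_mul_field, iteratedDeriv_eq_iterate, Real.iter_deriv_rpow_const,
    descPochhammer_eval_eq_prod_range, mul_assoc]

lemma HasExpA_iff {γ : ℝ} {c : ℕ → ℝ} {α : ℝ → ℝ} :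
    HasExpA γ c α ↔ Sm α ∧ ∀ N : ℕ, SS (γ - N) (fun x => α x - TT γ c N x) := by
  have h0 : (∃ a : ℝ, 0 < a ∧ ∀ x ∈ Set.Ioi a, ContDiffAt ℝ (⊤ : ℕ∞) α x) ↔ Sm α := by
    constructor
    · rintro ⟨a, _, h⟩
      filter_upwards [eventually_gt_atTop a] with x hx
      exact h x hx
    · intro h
      obtain ⟨a, ha⟩ := eventually_atTop.1 h
      exact ⟨max a 1, by positivity, fun x hx => ha x ((le_max_left _ _).trans (le_of_lt hx))⟩
  unfold HasExpA
  rw [h0]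
  refine and_congr_right fun hs => ?_
  rw [forall_comm]
  refine forall_congr' fun N => ?_
  rw [SS_iff, and_iff_right (hs.sub (TT_smooth γ c N))]
  refine forall_congr' fun j => ?_
  refine Asymptotics.isBigO_congr ?_ EventuallyEq.rfl
  filter_upwards [hs, TT_smooth γ c N, eventually_gt_atTop 0] with x h1 h2 hx
  rw [iteratedDeriv_fun_sub (h1.of_le (by exact_mod_cast le_top))
    (h2.of_le (by exact_mod_cast le_top)), TT_iter γ c N j hx]

lemma SS.inv_pow (N : ℕ) : SS (-(N : ℝ)) (fun x => (x⁻¹) ^ N) := by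
  refine (SS.rpow (-(N : ℝ))).congr ?_
  filter_upwards [eventually_gt_atTop 0] with x hx
  rw [Real.rpow_neg hx.le, Real.rpow_natCast, _root_.inv_pow]

lemma SS.mul0 {f g : ℝ → ℝ} {m : ℝ} (h : SS m f) (k : SS 0 g) : SS m (fun x => f x * g x) := by
  have := h.mul k
  rwa [add_zero] at this

lemma SS.poly {f : ℝ → ℝ} (h : SS 0 f) (p : Polynomial ℝ) : SS 0 (fun x => p.eval (f x)) := by
  induction p using Polynomial.induction_on with
  | C a => simpa using SS.const a
  | add p q hp hq => simpa using hp.add hq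
  | monomial n a ih =>
    have := ih.mul0 h
    refine this.congr (Eventually.of_forall fun x => ?_)
    simp [pow_succ, mul_assoc]

lemma SS.polyInv (p : Polynomial ℝ) : SS 0 (fun x => p.eval x⁻¹) := by
  refine SS.poly ?_ p
  have := (SS.inv_pow 1).mono (m' := 0) (by simp)
  simpa using this

/-- approximate to order N by a polynomial in 1/x -/
def QQ (N : ℕ) (f : ℝ → ℝ) : Prop :=
  ∃ p : Polynomial ℝ, SS (-(N : ℝ)) (fun x => f x - p.eval x⁻¹)

/-- full expansion -/
def QA (f : ℝ → ℝ) : Prop := ∀ N, QQ N f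

lemma QQ.ss {N : ℕ} {f : ℝ → ℝ} (h : QQ N f) : SS 0 f := by
  obtain ⟨p, hp⟩ := h
  refine ((hp.mono (by simp)).add (SS.polyInv p)).congr (Eventually.of_forall fun x => ?_)
  simp

lemma QA.ss {f : ℝ → ℝ} (h : QA f) : SS 0 f := (h 0).ss

lemma QA.congr {f g : ℝ → ℝ} (h : QA f) (e : f =ᶠ[atTop] g) : QA g := by
  intro N
  obtain ⟨p, hp⟩ := h N
  refine ⟨p, hp.congr ?_⟩
  filter_upwards [e] with x hx
  rw [hx]

lemma QA.polyInv (p : Polynomial ℝ) : QA (fun x => p.eval x⁻¹) := by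
  intro N
  refine ⟨p, fun n => ?_⟩
  simpa using BB.zero

lemma QA.const (c : ℝ) : QA (fun _ => c) := by simpa using QA.polyInv (Polynomial.C c)

lemma QQ.add {N : ℕ} {f g : ℝ → ℝ} (hf : QQ N f) (hg : QQ N g) : QQ N (fun x => f x + g x) := by
  obtain ⟨p, hp⟩ := hf
  obtain ⟨q, hq⟩ := hg
  refine ⟨p + q, (hp.add hq).congr (Eventually.of_forall fun x => ?_)⟩
  simp; ring

lemma QQ.mul {N : ℕ} {f g : ℝ → ℝ} (hf : QQ N f) (hg : QQ N g) : QQ N (fun x => f x * g x) := by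
  have hg0 := hg.ss
  obtain ⟨p, hp⟩ := hf
  obtain ⟨q, hq⟩ := hg
  refine ⟨p * q, ((hp.mul0 hg0).add (hq.mul0 (SS.polyInv p))).congr
    (Eventually.of_forall fun x => ?_)⟩
  simp; ring

lemma QQ.mul_succ {N : ℕ} {f g : ℝ → ℝ} (hf1 : SS (-1) f) (hf : QQ (N + 1) f) (hg : QQ N g) :
    QQ (N + 1) (fun x => f x * g x) := by
  have hg0 := hg.ss
  obtain ⟨p, hp⟩ := hf
  obtain ⟨q, hq⟩ := hg
  have hp1 : SS (-1) (fun x => p.eval x⁻¹) := by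
    refine (hf1.sub (hp.mono (by push_cast; linarith [(Nat.cast_nonneg N : (0 : ℝ) ≤ N)]))).congr
      (Eventually.of_forall fun x => ?_)
    simp
  have h2 := hq.mul hp1
  rw [show -(N : ℝ) + -1 = -((N + 1 : ℕ) : ℝ) by push_cast; ring] at h2
  refine ⟨p * q, ((hp.mul0 hg0).add h2).congr
    (Eventually.of_forall fun x => ?_)⟩
  simp; ring

lemma QA.add {f g : ℝ → ℝ} (hf : QA f) (hg : QA g) : QA (fun x => f x + g x) :=
  fun N => (hf N).add (hg N)
lemma QA.mul {f g : ℝ → ℝ} (hf : QA f) (hg : QA g) : QA (fun x => f x * g x) :=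
  fun N => (hf N).mul (hg N)

lemma QA.poly {f : ℝ → ℝ} (h : QA f) (p : Polynomial ℝ) : QA (fun x => p.eval (f x)) := by
  induction p using Polynomial.induction_on with
  | C a => simpa using QA.const a
  | add p q hp hq => simpa using hp.add hq
  | monomial n a ih =>
    refine (ih.mul h).congr (Eventually.of_forall fun x => ?_)
    simp [pow_succ, mul_assoc]

lemma rpow_neg_tendsto {m : ℝ} (h : m < 0) : Tendsto (fun x : ℝ => x ^ m) atTop (nhds 0) := by
  have := tendsto_rpow_neg_atTop (y := -m) (by linarith)
  simpa using this

lemma poly_tendsto (p : Polynomial ℝ) :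
    Tendsto (fun x : ℝ => p.eval x⁻¹) atTop (nhds (p.coeff 0)) := by
  have h := (p.continuous.tendsto 0).comp (tendsto_inv_atTop_zero (𝕜 := ℝ))
  rwa [← Polynomial.coeff_zero_eq_eval_zero] at h

lemma SS.tendsto {m : ℝ} {f : ℝ → ℝ} (h : SS m f) (hm : m < 0) : Tendsto f atTop (nhds 0) :=
  h.bigO.trans_tendsto (rpow_neg_tendsto hm)

lemma QQ.tendsto {N : ℕ} {f : ℝ → ℝ} {p : Polynomial ℝ}
    (h : SS (-((N + 1 : ℕ) : ℝ)) (fun x => f x - p.eval x⁻¹)) :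
    Tendsto f atTop (nhds (p.coeff 0)) := by
  have h1 := h.tendsto (by push_cast; linarith [(Nat.cast_nonneg N : (0 : ℝ) ≤ N)])
  have := h1.add (poly_tendsto p)
  simpa using this

/-- analytic after symbol of order 0 -/
lemma SS.analytic {v : ℝ → ℝ} {b : ℝ} (hv : SS 0 v) (hb : Tendsto v atTop (nhds b)) :
    ∀ {g : ℝ → ℝ}, AnalyticAt ℝ g b → SS 0 (fun x => g (v x)) := by
  intro g hg n
  have hsm : ∀ g : ℝ → ℝ, AnalyticAt ℝ g b → Sm (fun x => g (v x)) := by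
    intro g hg
    filter_upwards [hv.sm, hb.eventually hg.eventually_analyticAt] with x h1 h2
    exact ContDiffAt.comp x h2.contDiffAt h1
  have hO : ∀ g : ℝ → ℝ, AnalyticAt ℝ g b →
      (fun x => g (v x)) =O[atTop] fun x : ℝ => x ^ (0 : ℝ) := by
    intro g hg
    simp only [Real.rpow_zero]
    exact (hg.continuousAt.tendsto.comp hb).isBigO_one ℝ
  induction n generalizing g with
  | zero => exact ⟨hsm g hg, hO g hg⟩
  | succ n ih =>
    refine ⟨⟨hsm g hg, hO g hg⟩, ?_⟩
    have h1 := (ih hg.deriv).mul (hv (n + 1)).2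
    rw [show (0 : ℝ) + (0 - 1) = 0 - 1 by ring] at h1
    refine h1.congr ?_
    filter_upwards [hv.sm.diff, hb.eventually hg.eventually_analyticAt] with x h1 h2
    exact (deriv_comp x h2.differentiableAt h1).symm

lemma QA.sub_const_ss {v : ℝ → ℝ} {b : ℝ} (hv : QA v) (hb : Tendsto v atTop (nhds b)) :
    SS (-1) (fun x => v x - b) := by
  obtain ⟨p, hp⟩ := hv 1
  have hpb : p.coeff 0 = b := tendsto_nhds_unique (QQ.tendsto (N := 0) hp) hb
  obtain ⟨q, hq⟩ : Polynomial.X ∣ p - Polynomial.C b := by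
    rw [Polynomial.X_dvd_iff]; simp [hpb]
  have h1 : SS (-1) (fun x => x⁻¹ * q.eval x⁻¹) := by
    have := (SS.inv_pow 1).mul0 (SS.polyInv q)
    simpa using this
  simp only [Nat.cast_one] at hp
  refine (hp.add h1).congr (Eventually.of_forall fun x => ?_)
  have := congrArg (Polynomial.eval x⁻¹) hq
  simp at this
  linarith

lemma QA.analytic {v : ℝ → ℝ} {b : ℝ} (hv : QA v) (hb : Tendsto v atTop (nhds b))
    {g : ℝ → ℝ} (hg : AnalyticAt ℝ g b) : QA (fun x => g (v x)) := by
  intro N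
  have hw := hv.sub_const_ss hb
  have hwQ : QA (fun x => v x - b) :=
    (hv.add (QA.const (-b))).congr (Eventually.of_forall fun x => by simp; ring)
  induction N generalizing g with
  | zero =>
    refine ⟨0, ?_⟩
    simpa using SS.analytic hv.ss hb hg
  | succ N ih =>
    obtain ⟨P, hP⟩ := hg
    have hd : AnalyticAt ℝ (dslope g b) b := ⟨_, hP.has_fpower_series_dslope_fslope⟩
    have h1 := (QA.const (g b) (N + 1)).add (QQ.mul_succ hw (hwQ (N + 1)) (ih hd))
    have e : (fun x => g b + (v x - b) * dslope g b (v x)) = fun x => g (v x) := by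
      funext x
      have := sub_smul_dslope g b (v x)
      rw [smul_eq_mul] at this
      rw [this]; ring
    rwa [e] at h1

lemma poly_unique (N : ℕ) : ∀ (r : Polynomial ℝ),
    (fun x : ℝ => r.eval x⁻¹) =O[atTop] (fun x : ℝ => x ^ (-(N : ℝ))) → Polynomial.X ^ N ∣ r := by
  induction N with
  | zero => intro r _; simp
  | succ N ih =>
    intro r h
    obtain ⟨s, rfl⟩ := ih r (h.trans (rpow_bigO (by push_cast; linarith)))
    have h1 := bigO_mul h (Asymptotics.isBigO_refl (fun x : ℝ => x ^ (N : ℝ)) atTop)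
    rw [show -((N + 1 : ℕ) : ℝ) + N = -1 by push_cast; ring] at h1
    have h2 := h1.trans_tendsto (rpow_neg_tendsto (by norm_num))
    have h3 : Tendsto (fun x : ℝ => s.eval x⁻¹) atTop (nhds 0) := by
      refine h2.congr' ?_
      filter_upwards [eventually_gt_atTop 0] with x hx
      simp only [Polynomial.eval_mul, Polynomial.eval_pow, Polynomial.eval_X, Real.rpow_natCast]
      rw [mul_right_comm, ← mul_pow, inv_mul_cancel₀ hx.ne', one_pow, one_mul]
    have h4 := tendsto_nhds_unique h3 (poly_tendsto s)
    obtain ⟨t, rfl⟩ := Polynomial.X_dvd_iff.2 h4.symm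
    exact ⟨t, by ring⟩

lemma memAS_of_QA {γ : ℝ} {f : ℝ → ℝ} (h : QA (fun x => x ^ (-γ) * f x)) {b : ℝ}
    (hb : Tendsto (fun x => x ^ (-γ) * f x) atTop (nhds b)) (hb0 : b ≠ 0) : MemAS γ f := by
  choose p hp using h
  have hfx : (fun x => x ^ γ * (x ^ (-γ) * f x)) =ᶠ[atTop] f := by
    filter_upwards [eventually_gt_atTop 0] with x hx
    rw [← mul_assoc, ← Real.rpow_add hx]; simp
  have hcoef : ∀ N i, i < N → (p N).coeff i = (p (i + 1)).coeff i := by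
    intro N i hi
    have h1 : SS (-((i + 1 : ℕ) : ℝ)) (fun x => (p (i + 1) - p N).eval x⁻¹) := by
      refine (((hp N).mono ?_).sub (hp (i + 1))).congr (Eventually.of_forall fun x => ?_)
      · rw [neg_le_neg_iff]; exact_mod_cast hi
      · simp
    have := Polynomial.X_pow_dvd_iff.1 (poly_unique _ _ h1.bigO) i (Nat.lt_succ_self i)
    rw [Polynomial.coeff_sub] at this
    linarith
  refine ⟨fun i => (p (i + 1)).coeff i, ?_, HasExpA_iff.2 ⟨?_, fun N => ?_⟩⟩
  · have := tendsto_nhds_unique (QQ.tendsto (N := 0) (hp 1)) hb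
    simpa [this] using hb0
  · have : SS 0 (fun x => x ^ (-γ) * f x) := QQ.ss ⟨p 0, hp 0⟩
    exact ((SS.rpow γ).mul this).sm.congr hfx
  · set c : ℕ → ℝ := fun i => (p (i + 1)).coeff i with hc
    set P : Polynomial ℝ := ∑ i ∈ Finset.range N, Polynomial.C (c i) * Polynomial.X ^ i with hP
    obtain ⟨s, hs⟩ : Polynomial.X ^ N ∣ p N - P := by
      rw [Polynomial.X_pow_dvd_iff]
      intro d hd
      rw [Polynomial.coeff_sub, hcoef N d hd, hP, Polynomial.finsetSum_coeff]
      simp [Polynomial.coeff_X_pow, hd, hc]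
    have h1 : SS (-(N : ℝ)) (fun x => (x ^ (-γ) * f x - (p N).eval x⁻¹) + (x⁻¹) ^ N * s.eval x⁻¹) :=
      (hp N).add ((SS.inv_pow N).mul0 (SS.polyInv s))
    have h2 := (SS.rpow γ).mul h1
    rw [← sub_eq_add_neg] at h2
    refine h2.congr ?_
    filter_upwards [eventually_gt_atTop 0, hfx] with x hx hfx
    have e := congrArg (Polynomial.eval x⁻¹) hs
    simp only [Polynomial.eval_sub, Polynomial.eval_mul, Polynomial.eval_pow,
      Polynomial.eval_X] at e
    have e2 : x ^ γ * P.eval x⁻¹ = TT γ c N x := by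
      rw [hP, Polynomial.eval_finsetSum, Finset.mul_sum, TT]
      refine Finset.sum_congr rfl fun i _ => ?_
      rw [Real.rpow_sub hx, Real.rpow_natCast]
      simp
      ring
    rw [← e, ← e2]
    nth_rewrite 2 [← hfx]
    ring

lemma QA_of_memAS {γ : ℝ} {f : ℝ → ℝ} (h : MemAS γ f) :
    QA (fun x => x ^ (-γ) * f x) ∧
      ∃ b, b ≠ 0 ∧ Tendsto (fun x => x ^ (-γ) * f x) atTop (nhds b) := by
  obtain ⟨c, hc0, hc⟩ := h
  obtain ⟨hs, hN⟩ := HasExpA_iff.1 hc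
  have key : ∀ N : ℕ, SS (-(N : ℝ)) (fun x => x ^ (-γ) * f x -
      (∑ i ∈ Finset.range N, Polynomial.C (c i) * Polynomial.X ^ i : Polynomial ℝ).eval x⁻¹) := by
    intro N
    have h1 := (SS.rpow (-γ)).mul (hN N)
    rw [show -γ + (γ - N) = -(N : ℝ) by ring] at h1
    refine h1.congr ?_
    filter_upwards [eventually_gt_atTop 0] with x hx
    rw [mul_sub, Polynomial.eval_finsetSum, TT, Finset.mul_sum]
    congr 1
    refine Finset.sum_congr rfl fun i _ => ?_
    rw [Real.rpow_sub hx, Real.rpow_natCast, Real.rpow_neg hx.le]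
    have : x ^ γ ≠ 0 := (Real.rpow_pos_of_pos hx γ).ne'
    simp
    field_simp
  refine ⟨fun N => ⟨_, key N⟩, c 0, hc0, ?_⟩
  have := QQ.tendsto (N := 0) (key 1)
  simpa using this

lemma SS.comp {β : ℝ → ℝ} {k : ℝ} (hβ : SS k β) (hβt : Tendsto β atTop atTop)
    (hβO : ∀ m : ℝ, (fun x => β x ^ m) =O[atTop] fun x : ℝ => x ^ (k * m)) :
    ∀ {m : ℝ} {R : ℝ → ℝ}, SS m R → SS (k * m) (fun x => R (β x)) := by
  have key : ∀ n : ℕ, ∀ {m : ℝ} {R : ℝ → ℝ}, BB n m R → BB n (k * m) (fun x => R (β x)) := by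
    intro n
    have hsm : ∀ {R : ℝ → ℝ}, Sm R → Sm (fun x => R (β x)) := by
      intro R hR
      filter_upwards [hβ.sm, hβt.eventually hR] with x h1 h2
      exact ContDiffAt.comp x h2 h1
    have hO : ∀ {m : ℝ} {R : ℝ → ℝ}, (R =O[atTop] fun x : ℝ => x ^ m) →
        (fun x => R (β x)) =O[atTop] fun x : ℝ => x ^ (k * m) := by
      intro m R hR
      exact (hR.comp_tendsto hβt).trans (hβO m)
    induction n with
    | zero => intro m R h; exact ⟨hsm h.1, hO h.2⟩
    | succ n ih =>
      intro m R h
      refine ⟨⟨hsm h.1.1, hO h.1.2⟩, ?_⟩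
      have h1 := (ih h.2).mul (hβ (n + 1)).2
      rw [show k * (m - 1) + (k - 1) = k * m - 1 by ring] at h1
      refine h1.congr ?_
      filter_upwards [hβ.sm.diff, hβt.eventually h.1.1.diff] with x h1 h2
      exact (deriv_comp x h2 h1).symm
  intro m R h n
  exact key n (h n)

lemma rpow_analyticAt {b : ℝ} (hb : 0 < b) (s : ℝ) : AnalyticAt ℝ (fun y : ℝ => y ^ s) b :=
  (Real.contDiffAt_rpow_const_of_ne hb.ne').analyticAt

/-- If `α ∈ A^(γ)` strictly and `β ∈ A^(k)` strictly for a positive integer `k`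
with `β(x) > 0` for all large `x > 0`, then `θ(x) = α(β(x))` belongs to `A^(kγ)` strictly. -/
theorem memAS_comp (γ : ℝ) (α : ℝ → ℝ) (hα : MemAS γ α)
    (k : ℕ) (hk : 0 < k) (β : ℝ → ℝ) (hβ : MemAS (k : ℝ) β)
    (hpos : ∀ᶠ x in atTop, 0 < β x) :
    MemAS ((k : ℝ) * γ) (fun x => α (β x)) := by
  obtain ⟨hu, a, ha0, hat⟩ := QA_of_memAS hα
  obtain ⟨hv, b, hb0, hbt⟩ := QA_of_memAS hβ
  set u : ℝ → ℝ := fun y => y ^ (-γ) * α y with hudef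
  set v : ℝ → ℝ := fun x => x ^ (-(k : ℝ)) * β x with hvdef
  have hkR : (0 : ℝ) < k := by exact_mod_cast hk
  have hvpos : ∀ᶠ x in atTop, 0 < v x := by
    filter_upwards [hpos, eventually_gt_atTop 0] with x h1 h2
    exact mul_pos (Real.rpow_pos_of_pos h2 _) h1
  have hb : 0 < b := lt_of_le_of_ne
    (ge_of_tendsto hbt (hvpos.mono fun x hx => hx.le)) hb0.symm
  have hβv : (fun x => x ^ (k : ℝ) * v x) =ᶠ[atTop] β := by
    filter_upwards [eventually_gt_atTop 0] with x hx
    rw [hvdef]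
    simp only
    rw [← mul_assoc, ← Real.rpow_add hx]; simp
  have hβS : SS k β := ((SS.rpow (k : ℝ)).mul0 hv.ss).congr hβv
  have hβt : Tendsto β atTop atTop :=
    ((tendsto_rpow_atTop hkR).atTop_mul_pos hb hbt).congr' hβv
  have hvs : ∀ s : ℝ, QA (fun x => v x ^ s) := fun s => hv.analytic hbt (rpow_analyticAt hb s)
  have hβs : ∀ s : ℝ, (fun x => x ^ ((k : ℝ) * s) * v x ^ s) =ᶠ[atTop] fun x => β x ^ s := by
    intro s
    filter_upwards [eventually_gt_atTop 0, hβv, hvpos] with x hx h1 h2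
    rw [← h1, Real.mul_rpow (by positivity) h2.le, ← Real.rpow_mul hx.le]
  have hβO : ∀ m : ℝ, (fun x => β x ^ m) =O[atTop] fun x : ℝ => x ^ ((k : ℝ) * m) := fun m =>
    (((SS.rpow ((k : ℝ) * m)).mul0 (hvs m).ss).congr (hβs m)).bigO
  have hinv : QA (fun x => (β x)⁻¹) := by
    refine ((QA.polyInv (Polynomial.X ^ k)).mul (hvs (-1))).congr ?_
    filter_upwards [eventually_gt_atTop 0, hβv, hvpos] with x hx h1 h2
    rw [← h1, Real.rpow_neg h2.le, Real.rpow_natCast]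
    simp [mul_comm]
  have huβ : QA (fun x => u (β x)) := by
    intro N
    obtain ⟨p, hp⟩ := hu N
    have h1 := SS.comp hβS hβt hβO hp
    have h2 : SS (-(N : ℝ)) (fun x => u (β x) - p.eval (β x)⁻¹) := by
      refine h1.mono ?_
      have h1k : (1 : ℝ) ≤ k := by exact_mod_cast hk
      nlinarith [(Nat.cast_nonneg N : (0 : ℝ) ≤ N)]
    obtain ⟨q, hq⟩ := hinv.poly p N
    exact ⟨q, (h2.add hq).congr (Eventually.of_forall fun x => by simp)⟩
  have heq : (fun x => u (β x) * v x ^ γ) =ᶠ[atTop] fun x => x ^ (-((k : ℝ) * γ)) * α (β x) := by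
    filter_upwards [eventually_gt_atTop 0, hβs (-γ), hvpos] with x hx h1 h2
    rw [hudef]
    simp only
    rw [← h1, Real.rpow_neg h2.le, show (k : ℝ) * -γ = -((k : ℝ) * γ) by ring]
    have : v x ^ γ ≠ 0 := (Real.rpow_pos_of_pos h2 γ).ne'
    field_simp
  refine memAS_of_QA ((huβ.mul (hvs γ)).congr heq) (b := a * b ^ γ) (Tendsto.congr' heq ?_) ?_
  · exact (hat.comp hβt).mul (hbt.rpow_const (Or.inl hb0))
  · exact mul_ne_zero ha0 (Real.rpow_pos_of_pos hb γ).ne'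
end
end

section
/- Let f be m times continuously differentiable and satisfy f(t) = Σ_{k=1}^m p_k(t) f^{(k)}(t) for all large t, and let g be infinitely differentiable for all large x with g(x) → +∞ as x → ∞. Suppose the functions π_1, …, π_m satisfy the upper triangular linear system p_k(g(x)) = Σ_{n=k}^m π_n(x) B_{n,k}(g'(x), g''(x), …, g^{(n−k+1)}(x)) for k = 1, …, m and all large x, where B_{n,k} is the Bell polynomial. Then φ(x) = f(g(x)) satisfies φ(x) = Σ_{n=1}^m π_n(x) φ^{(n)}(x) for all large x. Moreover, since the system is upper triangular with diagonal entries B_{k,k}(g'(x)) = (g'(x))^k, if g'(x) > 0 for all large x then functions π_1, …, π_m satisfying the system exist and are uniquely determined for all large x. -/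
open Filter Finset Real

noncomputable section

def tsPs (y : ℕ → ℝ) : PowerSeries ℝ := PowerSeries.mk fun i => if i = 0 then 0 else y i / (i.factorial : ℝ)

def tsC (n k : ℕ) (y : ℕ → ℝ) : ℝ :=
  (n.factorial : ℝ) / (k.factorial : ℝ) * PowerSeries.coeff n (tsPs y ^ k)

lemma tsPs_eq_X_mul (y : ℕ → ℝ) : ∃ W : PowerSeries ℝ, tsPs y = PowerSeries.X * W ∧
    PowerSeries.constantCoeff W = y 1 := by
  have h : PowerSeries.X ∣ tsPs y := by
    rw [PowerSeries.X_dvd_iff]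
    simp [tsPs, ← PowerSeries.coeff_zero_eq_constantCoeff_apply]
  obtain ⟨W, hW⟩ := h
  refine ⟨W, hW, ?_⟩
  have := congrArg (PowerSeries.coeff (0+1)) hW
  rw [PowerSeries.coeff_succ_X_mul] at this
  rw [← PowerSeries.coeff_zero_eq_constantCoeff_apply, ← this]
  simp [tsPs]

lemma tsC_diag (k : ℕ) (y : ℕ → ℝ) : tsC k k y = y 1 ^ k := by
  obtain ⟨W, hW, h1⟩ := tsPs_eq_X_mul y
  have h := PowerSeries.coeff_X_pow_mul (W ^ k) k 0
  rw [zero_add] at h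
  have hk : (k.factorial : ℝ) ≠ 0 := by positivity
  rw [tsC, hW, mul_pow, h, PowerSeries.coeff_zero_eq_constantCoeff_apply, map_pow, h1,
    div_self hk, one_mul]

lemma tsC_hasDerivAt_aux (y : ℝ → ℕ → ℝ) (x : ℝ)
    (hy : ∀ i, 1 ≤ i → HasDerivAt (fun t => y t i) (y x (i+1)) x) (k : ℕ) : ∀ n,
    HasDerivAt (fun t => PowerSeries.coeff n (tsPs (y t) ^ k))
      (PowerSeries.coeff n ((k : PowerSeries ℝ) * tsPs (y x) ^ (k-1) *
        (PowerSeries.derivative ℝ (tsPs (y x)) - PowerSeries.C (y x 1)))) x := by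
  set Z := PowerSeries.derivative ℝ (tsPs (y x)) - PowerSeries.C (y x 1) with hZ
  have h1 : ∀ i, HasDerivAt (fun t => PowerSeries.coeff i (tsPs (y t)))
      (PowerSeries.coeff i Z) x := by
    intro i
    rw [hZ, map_sub, PowerSeries.coeff_derivative, PowerSeries.coeff_C]
    rcases Nat.eq_zero_or_pos i with rfl | hi
    · simpa [tsPs] using hasDerivAt_const x (0:ℝ)
    · have := (hy i hi).div_const (i.factorial : ℝ)
      have hi' : i ≠ 0 := by omega
      simp only [tsPs, PowerSeries.coeff_mk, hi', if_false, Nat.succ_ne_zero]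
      refine this.congr_deriv ?_
      rw [Nat.factorial_succ]
      have hk : (i.factorial : ℝ) ≠ 0 := by positivity
      push_cast
      field_simp
      ring
  induction k with
  | zero =>
    intro n
    simpa using hasDerivAt_const x _
  | succ k ih =>
    intro n
    have : HasDerivAt (fun t => ∑ q ∈ antidiagonal n,
        PowerSeries.coeff q.1 (tsPs (y t) ^ k) * PowerSeries.coeff q.2 (tsPs (y t))) _ x :=
      HasDerivAt.fun_sum fun q _ => (ih q.1).mul (h1 q.2)
    simp only [pow_succ, PowerSeries.coeff_mul _ (tsPs _ ^ k)]
    refine this.congr_deriv ?_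
    rw [Finset.sum_add_distrib, ← PowerSeries.coeff_mul, ← PowerSeries.coeff_mul, ← map_add]
    congr 1
    rcases k with _ | k
    · simp
    · simp only [Nat.add_sub_cancel]
      push_cast
      ring

lemma tsC_hasDerivAt (y : ℝ → ℕ → ℝ) (x : ℝ)
    (hy : ∀ i, 1 ≤ i → HasDerivAt (fun t => y t i) (y x (i+1)) x) (n k : ℕ) :
    HasDerivAt (fun t => tsC n k (y t))
      (tsC (n+1) k (y x) - if k = 0 then 0 else y x 1 * tsC n (k-1) (y x)) x := by
  have h := (tsC_hasDerivAt_aux y x hy k n).const_mul ((n.factorial : ℝ) / (k.factorial : ℝ))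
  unfold tsC
  refine h.congr_deriv ?_
  have e : (k : PowerSeries ℝ) * tsPs (y x) ^ (k-1) *
        (PowerSeries.derivative ℝ (tsPs (y x)) - PowerSeries.C (y x 1)) =
      PowerSeries.derivative ℝ (tsPs (y x) ^ k)
        - PowerSeries.C (k * y x 1) * tsPs (y x) ^ (k-1) := by
    rw [Derivation.leibniz_pow]
    simp only [nsmul_eq_mul, smul_eq_mul, map_mul, map_natCast]
    ring
  rw [e, map_sub, PowerSeries.coeff_derivative, PowerSeries.coeff_C_mul, Nat.factorial_succ]
  rcases k with _ | k
  · simp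
    try ring
  · simp only [Nat.succ_ne_zero, if_false, Nat.add_sub_cancel]
    rw [Nat.factorial_succ]
    have hk : (k.factorial : ℝ) ≠ 0 := by positivity
    push_cast
    field_simp
    

lemma ts_faa (m : ℕ) (f g : ℝ → ℝ) (hf : ContDiff ℝ (m : ℕ∞) f) (a : ℝ)
    (hg : ∀ x, a < x → ContDiffAt ℝ (⊤ : ℕ∞) g x) (n : ℕ) (hn : n ≤ m) :
    ∀ x, a < x → iteratedDeriv n (fun t => f (g t)) x =
      ∑ k ∈ range (n+1), tsC n k (fun i => iteratedDeriv i g x) * iteratedDeriv k f (g x) := by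
  induction n with
  | zero => intro x _; simp [tsC]
  | succ n ih =>
    intro x hx
    have hgi : ∀ i, HasDerivAt (iteratedDeriv i g) (iteratedDeriv (i+1) g x) x := by
      intro i
      rw [iteratedDeriv_succ]
      refine DifferentiableAt.hasDerivAt ?_
      rw [iteratedDeriv_eq_equiv_comp]
      exact (LinearIsometryEquiv.differentiable _).differentiableAt.comp x
        ((hg x hx).differentiableAt_iteratedFDeriv (by exact_mod_cast ENat.natCast_lt_top i))
    have hg0 : HasDerivAt g (iteratedDeriv 1 g x) x := by
      have := hgi 0
      rwa [iteratedDeriv_zero] at this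
    have hfi : ∀ k, k ≤ n → HasDerivAt (iteratedDeriv k f) (iteratedDeriv (k+1) f (g x)) (g x) := by
      intro k hk
      rw [iteratedDeriv_succ]
      refine DifferentiableAt.hasDerivAt ?_
      exact (hf.differentiable_iteratedDeriv k (by exact_mod_cast (by omega : k < m))) _
    have hev : iteratedDeriv n (fun t => f (g t)) =ᶠ[nhds x] fun x => ∑ k ∈ range (n+1), tsC n k (fun i => iteratedDeriv i g x) * iteratedDeriv k f (g x) := by
      filter_upwards [lt_mem_nhds hx] with t ht using ih (by omega) t ht
    rw [iteratedDeriv_succ, hev.deriv_eq]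
    have hd : HasDerivAt (fun x => ∑ k ∈ range (n+1), tsC n k (fun i => iteratedDeriv i g x) * iteratedDeriv k f (g x)) _ x :=
      HasDerivAt.fun_sum fun k hk => (tsC_hasDerivAt (fun t i => iteratedDeriv i g t) x
        (fun i _ => hgi i) n k).mul (HasDerivAt.comp x (hfi k (by simp at hk; omega)) hg0)
    rw [hd.deriv]
    rw [Finset.sum_range_succ _ (n+1), tsC_diag, pow_succ, ← tsC_diag n (fun i => iteratedDeriv i g x)]
    simp only [sub_mul, Finset.sum_add_distrib, Finset.sum_sub_distrib, zero_add]
    rw [Finset.sum_range_succ' (fun k => (if k = 0 then (0:ℝ) else _) * _) n, Finset.sum_range_succ (fun k => tsC n k _ * _)]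
    simp only [Nat.succ_ne_zero, if_false, if_true, Nat.add_sub_cancel, zero_mul, add_zero]
    have : ∀ A B C D : ℝ, B = C → A - B + (C + D) = A + D := by intros; linarith
    rw [this]
    · ring
    · refine Finset.sum_congr rfl fun k _ => ?_
      ring

lemma ts_bell (n k : ℕ) (hk : 1 ≤ k) (hkn : k ≤ n) (y : ℕ → ℝ) : bellPoly n k y = tsC n k y := by
  set N := n - k + 1 with hN
  set T : PowerSeries ℝ := ∑ i : Fin N, PowerSeries.C (y (i.1+1) / ((i.1+1).factorial : ℝ)) * PowerSeries.X ^ (i.1+1) with hT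
  have hcT : ∀ j, PowerSeries.coeff j T = if 1 ≤ j ∧ j ≤ N then y j / (j.factorial : ℝ) else 0 := by
    intro j
    simp only [hT, map_sum, PowerSeries.coeff_C_mul, PowerSeries.coeff_X_pow]
    split_ifs with h
    · rw [Finset.sum_eq_single (⟨j-1, by omega⟩ : Fin N)]
      · have : j - 1 + 1 = j := by omega
        simp [this]
      · intro b _ hb
        have : j ≠ b.1 + 1 := fun h' => hb (Fin.ext (by simp; omega))
        simp [this]
      · simp
    · refine Finset.sum_eq_zero fun i _ => ?_
      have : j ≠ i.1 + 1 := by have := i.2; omega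
      simp [this]
  have h1 : PowerSeries.X ^ (N+1) ∣ tsPs y - T := by
    rw [PowerSeries.X_pow_dvd_iff]
    intro j hj
    rw [map_sub, hcT, tsPs, PowerSeries.coeff_mk]
    rcases j with _ | j
    · simp
    · have hjN : j < N := by omega
      simp [hjN]
  have hXY : PowerSeries.X ∣ tsPs y := by
    obtain ⟨W, h, _⟩ := tsPs_eq_X_mul y; exact ⟨W, h⟩
  have hXT : PowerSeries.X ∣ T := by
    rw [PowerSeries.X_dvd_iff, ← PowerSeries.coeff_zero_eq_constantCoeff_apply, hcT]; simp
  have h2 : PowerSeries.X ^ (n+1) ∣ tsPs y ^ k - T ^ k := by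
    rw [← (Commute.all _ _).mul_geom_sum₂]
    have : n + 1 = (N+1) + (k-1) := by omega
    rw [this, pow_add]
    refine mul_dvd_mul h1 (Finset.dvd_sum fun i hi => ?_)
    have : k - 1 = i + (k - 1 - i) := by simp at hi; omega
    conv_lhs => rw [this, pow_add]
    exact mul_dvd_mul (pow_dvd_pow_of_dvd hXY _) (pow_dvd_pow_of_dvd hXT _)
  have h3 : PowerSeries.coeff n (tsPs y ^ k) = PowerSeries.coeff n (T ^ k) := by
    have := (PowerSeries.X_pow_dvd_iff.1 h2) n (by omega)
    rw [map_sub] at this; linarith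
  rw [tsC, h3, hT, Finset.sum_pow_eq_sum_piAntidiag, map_sum, Finset.mul_sum, bellPoly]
  have hco : ∀ c : Fin N → ℕ, PowerSeries.coeff n ((Nat.multinomial univ c : PowerSeries ℝ) *
      ∏ i, (PowerSeries.C (y (i.1+1) / ((i.1+1).factorial : ℝ)) * PowerSeries.X ^ (i.1+1)) ^ c i) =
      if ∑ i, (i.1+1) * c i = n then (Nat.multinomial univ c : ℝ) * ∏ i, (y (i.1+1) / ((i.1+1).factorial : ℝ)) ^ c i else 0 := by
    intro c
    have : (Nat.multinomial univ c : PowerSeries ℝ) *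
      ∏ i, (PowerSeries.C (y (i.1+1) / ((i.1+1).factorial : ℝ)) * PowerSeries.X ^ (i.1+1)) ^ c i =
      PowerSeries.C ((Nat.multinomial univ c : ℝ) * ∏ i, (y (i.1+1) / ((i.1+1).factorial : ℝ)) ^ c i) * PowerSeries.X ^ (∑ i, (i.1+1) * c i) := by
      simp only [mul_pow, Finset.prod_mul_distrib, ← pow_mul, Finset.prod_pow_eq_pow_sum, map_mul, map_prod, map_pow, map_natCast]
      ring
    rw [this, PowerSeries.coeff_C_mul, PowerSeries.coeff_X_pow]
    simp [eq_comm]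
  simp only [hco, mul_ite, mul_zero]
  rw [← Finset.sum_filter]
  refine Finset.sum_bij' (fun j _ => fun i => (j i : ℕ)) (fun c _ => fun i => Fin.ofNat (n+1) (c i)) ?_ ?_ ?_ ?_ ?_
  · intro j hj
    simpa using hj
  · intro c hc
    simp only [mem_filter, mem_piAntidiag, mem_univ, true_and] at hc ⊢
    have hle : ∀ i, c i % (n+1) = c i := fun i => Nat.mod_eq_of_lt (by
      have := Finset.single_le_sum (f := c) (fun _ _ => Nat.zero_le _) (mem_univ i)
      have h3 : ∑ i, c i = k := hc.1.1
      omega)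
    simp only [Fin.ofNat, hle]
    exact ⟨hc.1.1, hc.2⟩
  · intro j hj
    ext i
    simp [Fin.ofNat, Nat.mod_eq_of_lt (j i).2]
  · intro c hc
    simp only [mem_filter, mem_piAntidiag, mem_univ, true_and] at hc ⊢
    have hle : ∀ i, c i % (n+1) = c i := fun i => Nat.mod_eq_of_lt (by
      have := Finset.single_le_sum (f := c) (fun _ _ => Nat.zero_le _) (mem_univ i)
      have h3 : ∑ i, c i = k := hc.1.1
      omega)
    ext i
    simp [Fin.ofNat, hle]
  · intro j hj
    simp only [mem_filter, mem_univ, true_and] at hj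
    have hs := Nat.multinomial_spec univ (fun i => (j i : ℕ))
    rw [hj.1] at hs
    have hs' : (∏ i, ((j i : ℕ).factorial : ℝ)) * (Nat.multinomial univ (fun i => (j i : ℕ)) : ℝ) = (k.factorial : ℝ) := by
      exact_mod_cast hs
    rw [← mul_assoc, ← hs']
    have hp : (∏ i, ((j i : ℕ).factorial : ℝ)) ≠ 0 := Finset.prod_ne_zero_iff.2 fun i _ => by positivity
    have hp2 : (Nat.multinomial univ (fun i => (j i : ℕ)) : ℝ) ≠ 0 := by
      intro h0; rw [h0, mul_zero] at hs'; exact (by positivity : (k.factorial : ℝ) ≠ 0) hs'.symm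
    congr 1
    field_simp
    rfl

lemma ts_exists (m : ℕ) (a : ℕ → ℕ → ℝ) (b : ℕ → ℝ) (ha : ∀ k ∈ Icc 1 m, a k k ≠ 0) (j : ℕ) :
    ∃ P : ℕ → ℝ, ∀ k ∈ Icc 1 m, m < k + j → b k = ∑ n ∈ Icc k m, P n * a n k := by
  induction j with
  | zero => exact ⟨0, fun k hk h => by simp at hk; omega⟩
  | succ j ih =>
    obtain ⟨P, hP⟩ := ih
    by_cases hj : m - j ∈ Icc 1 m
    · set q := m - j with hq
      have hjm : j < m := by simp at hj; omega
      refine ⟨Function.update P q ((b q - ∑ n ∈ Ioc q m, P n * a n q) / a q q), ?_⟩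
      intro k hk hkj
      have key : ∀ k, q ≤ k → ∀ v, ∑ n ∈ Ioc k m, Function.update P q v n * a n k = ∑ n ∈ Ioc k m, P n * a n k := by
        intro k hqk v
        refine Finset.sum_congr rfl fun n hn => ?_
        rw [Function.update_of_ne]
        simp at hn; omega
      have hkm : k ≤ m := (Finset.mem_Icc.1 hk).2
      rw [← Finset.Ioc_insert_left hkm, Finset.sum_insert (by simp), key k (by omega)]
      by_cases hkq : k = q
      · subst hkq
        rw [Function.update_self, div_mul_cancel₀ _ (ha _ hk)]; ring
      · rw [Function.update_of_ne hkq, hP k hk (by omega), ← Finset.Ioc_insert_left hkm, Finset.sum_insert (by simp)]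
    · refine ⟨P, fun k hk hkj => hP k hk ?_⟩
      simp at hj hk
      omega

lemma ts_unique (m : ℕ) (a : ℕ → ℕ → ℝ) (b P Q : ℕ → ℝ) (ha : ∀ k ∈ Icc 1 m, a k k ≠ 0)
    (hP : ∀ k ∈ Icc 1 m, b k = ∑ n ∈ Icc k m, P n * a n k)
    (hQ : ∀ k ∈ Icc 1 m, b k = ∑ n ∈ Icc k m, Q n * a n k) (j : ℕ) :
    ∀ k ∈ Icc 1 m, m < k + j → P k = Q k := by
  induction j with
  | zero => intro k hk h; simp at hk; omega
  | succ j ih =>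
    intro k hk hkj
    have hkm : k ≤ m := (Finset.mem_Icc.1 hk).2
    have h := (hP k hk).symm.trans (hQ k hk)
    rw [← Finset.Ioc_insert_left hkm, Finset.sum_insert (by simp), Finset.sum_insert (by simp)] at h
    have : ∑ n ∈ Ioc k m, P n * a n k = ∑ n ∈ Ioc k m, Q n * a n k := by
      refine Finset.sum_congr rfl fun n hn => ?_
      simp at hn hk
      rw [ih n (by simp; omega) (by omega)]
    rw [this] at h
    exact mul_right_cancel₀ (ha k hk) (add_right_cancel h)

/-- if `f` is `m` times continuously differentiable and satisfies
`f(t) = Σ_{k=1}^m p_k(t) f^{(k)}(t)` for all large `t`, `g` is infinitely differentiable for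
all large `x` with `g(x) → +∞`, and `P_1, …, P_m` satisfy the upper triangular system
`p_k(g(x)) = Σ_{n=k}^m P_n(x) B_{n,k}(g'(x), …, g^{(n−k+1)}(x))`, `k = 1, …, m`, for all
large `x`, then `φ = f ∘ g` satisfies `φ(x) = Σ_{n=1}^m P_n(x) φ^{(n)}(x)` for all large `x`.
Moreover, if `g'(x) > 0` for all large `x`, then such `P_1, …, P_m` exist and are uniquely
determined for all large `x`. -/
theorem triangular_system (m : ℕ) (hm : 0 < m) (f g : ℝ → ℝ) (p : ℕ → ℝ → ℝ)
    (hf : ContDiff ℝ (m : ℕ∞) f)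
    (hg : ∀ᶠ x in atTop, ContDiffAt ℝ (⊤ : ℕ∞) g x)
    (hgtop : Tendsto g atTop atTop)
    (heq : ∀ᶠ t in atTop, f t = ∑ k ∈ Finset.Icc 1 m, p k t * iteratedDeriv k f t) :
    (∀ P : ℕ → ℝ → ℝ,
      (∀ᶠ x in atTop, ∀ k ∈ Finset.Icc 1 m,
        p k (g x) =
          ∑ n ∈ Finset.Icc k m, P n x * bellPoly n k (fun i => iteratedDeriv i g x)) →
      ∀ᶠ x in atTop,
        f (g x) = ∑ n ∈ Finset.Icc 1 m, P n x * iteratedDeriv n (fun t => f (g t)) x) ∧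
    ((∀ᶠ x in atTop, 0 < deriv g x) →
      (∃ P : ℕ → ℝ → ℝ, ∀ᶠ x in atTop, ∀ k ∈ Finset.Icc 1 m,
        p k (g x) =
          ∑ n ∈ Finset.Icc k m, P n x * bellPoly n k (fun i => iteratedDeriv i g x)) ∧
      (∀ P Q : ℕ → ℝ → ℝ,
        (∀ᶠ x in atTop, ∀ k ∈ Finset.Icc 1 m,
          p k (g x) =
            ∑ n ∈ Finset.Icc k m, P n x * bellPoly n k (fun i => iteratedDeriv i g x)) →
        (∀ᶠ x in atTop, ∀ k ∈ Finset.Icc 1 m,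
          p k (g x) =
            ∑ n ∈ Finset.Icc k m, Q n x * bellPoly n k (fun i => iteratedDeriv i g x)) →
        ∀ k ∈ Finset.Icc 1 m, ∀ᶠ x in atTop, P k x = Q k x)) := by

  have hdiag : ∀ x, 0 < deriv g x → ∀ k ∈ Icc 1 m,
      bellPoly k k (fun i => iteratedDeriv i g x) ≠ 0 := by
    intro x hx k hk
    rw [ts_bell k k (by simp at hk; omega) le_rfl, tsC_diag]
    simp only [iteratedDeriv_one]
    positivity
  refine ⟨?_, fun hpos => ⟨?_, ?_⟩⟩
  · intro P hP
    obtain ⟨a, ha⟩ := eventually_atTop.1 hg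
    filter_upwards [hP, hgtop.eventually heq, eventually_gt_atTop a] with x hPx hx hax
    rw [hx]
    have e1 : ∀ n ∈ Icc 1 m, P n x * iteratedDeriv n (fun t => f (g t)) x =
        ∑ k ∈ Icc 1 n, P n x * bellPoly n k (fun i => iteratedDeriv i g x) *
          iteratedDeriv k f (g x) := by
      intro n hn
      simp only [mem_Icc] at hn
      rw [ts_faa m f g hf a (fun x hx => ha x hx.le) n hn.2 x hax, Finset.sum_range_succ']
      have h0 : tsC n 0 (fun i => iteratedDeriv i g x) = 0 := by
        simp [tsC, PowerSeries.coeff_one]; omega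
      rw [h0, zero_mul, add_zero, Finset.mul_sum]
      rw [Finset.sum_bij' (fun k _ => k + 1) (fun k _ => k - 1)]
      · intro k hk; simp at hk ⊢; omega
      · intro k hk; simp at hk ⊢; omega
      · intro k hk; simp
      · intro k hk; simp at hk ⊢; omega
      · intro k hk
        simp at hk
        rw [ts_bell n (k+1) (by omega) (by omega), mul_assoc]
    rw [Finset.sum_congr rfl e1, Finset.sum_congr rfl
      (fun k hk => by rw [hPx k hk, Finset.sum_mul])]
    refine Finset.sum_comm' ?_
    intro k n
    simp only [mem_Icc]
    omega
  · have : ∀ x, ∃ P : ℕ → ℝ, 0 < deriv g x → ∀ k ∈ Icc 1 m, p k (g x) =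
        ∑ n ∈ Icc k m, P n * bellPoly n k (fun i => iteratedDeriv i g x) := by
      intro x
      by_cases hx : 0 < deriv g x
      · obtain ⟨P, hP⟩ := ts_exists m (fun n k => bellPoly n k (fun i => iteratedDeriv i g x))
          (fun k => p k (g x)) (hdiag x hx) m
        exact ⟨P, fun _ k hk => hP k hk (by simp at hk; omega)⟩
      · exact ⟨0, fun h => absurd h hx⟩
    choose P hP using this
    exact ⟨fun n x => P x n, hpos.mono fun x hx => hP x hx⟩
  · intro P Q hP hQ k hk
    filter_upwards [hP, hQ, hpos] with x h1 h2 h3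
    exact ts_unique m (fun n k => bellPoly n k (fun i => iteratedDeriv i g x))
      (fun k => p k (g x)) (fun n => P n x) (fun n => Q n x) (hdiag x h3) h1 h2 m k hk
      (by simp at hk; omega)
end
end
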